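/- arXiv:2007.10530 — 3 statements merged into one kernel-verified Lean document; each statement's English description precedes it below -/
import Mathlib

section
/- Let q be any prime power, n ≥ 3, and G = Sp_{2n}(q). Let π denote the permutation character of G acting on the set of 1-dimensional subspaces of 𝔽_q^{2n}. Then for every irreducible character χ ≠ 1_G of G one has ⟨χ · conj(χ), π⟩ ≥ 2; consequently, since ⟨χ·conj(χ), 1_G⟩ = 1, the product χ·conj(χ) contains a nontrivial irreducible constituent of π. -/
/-!
For `w ≠ 0` let `P w = ∑ a, ρ (t_{a, w})`, where `ρ` affords `χ` and `t_{a, w}` is the symplectic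
transvection `v ↦ v + a ⟨w, v⟩ w`. Since `t_{a, c w} = t_{a c², w}`, the operator `P w` depends
only on the line of `w`, and it is conjugated by `g ∈ G` to `P (g w)`. So `w ↦ P w` defines an
intertwining map from the permutation module on lines to `End V`, which affords `χ · conj χ`;
another one is the map sending every line to the identity. It remains to find a `P w` which is not
`G`-invariant.

The Siegel unipotent radical, isomorphic to the space of symmetric matrices, has a common
eigenvector `v ≠ 0` in `V`, on which `t_{-a, x}` with `x` in the standard Lagrangian acts as
`ψ (a Q x)` for an additive character `ψ` of `F` and a quadratic form `Q` in `n ≥ 3` variables. By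
Chevalley–Warning `Q x = 0` for some `x ≠ 0`, so that `P x v = q v ≠ 0`. All `t_{a, x}` fix this
vector; if `P x` were `G`-invariant, it would equal every `P w`, so every transvection, and
therefore `G`, would fix it, forcing `χ = 1`.
-/

open scoped BigOperators

namespace McKayGraphs

/-- The standard inner product of class functions on a finite group `G`:
`⟨φ,ψ⟩ = |G|⁻¹ Σ_{g∈G} φ(g)·conj(ψ(g))`. -/
noncomputable def charInner {G : Type*} [Group G] (φ ψ : G → ℂ) : ℂ :=
  (Nat.card G : ℂ)⁻¹ * ∑ᶠ g, φ g * (starRingEnd ℂ) (ψ g)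

/-- `χ : G → ℂ` is a character if it is the trace function of a finite-dimensional
complex representation of `G`. -/
def IsChar {G : Type*} [Group G] (χ : G → ℂ) : Prop :=
  ∃ (d : ℕ) (ρ : G →* Matrix.GeneralLinearGroup (Fin d) ℂ),
    ∀ g, χ g = Matrix.trace (ρ g : Matrix (Fin d) (Fin d) ℂ)

/-- An irreducible character of `G`: a character with `⟨χ,χ⟩ = 1`. -/
def IsIrrChar {G : Type*} [Group G] (χ : G → ℂ) : Prop :=
  IsChar χ ∧ charInner χ χ = 1

/-- `ψ` is a constituent of `φ` if `⟨φ,ψ⟩ ≠ 0`. -/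
def IsConstituent {G : Type*} [Group G] (ψ φ : G → ℂ) : Prop :=
  charInner φ ψ ≠ 0

/-- The permutation character of `Sp_{2n}(q)` acting on the set of 1-dimensional
subspaces of `𝔽_q^{2n}`: `π(g) = #{lines L : gL = L}`. -/
noncomputable def linesPermChar (F : Type*) [Field F] [Fintype F] (n : ℕ) :
    Matrix.symplecticGroup (Fin n) F → ℂ := fun g =>
  (Nat.card {L : Submodule F ((Fin n ⊕ Fin n) → F) //
      Module.finrank F L = 1 ∧
      L.map (Matrix.mulVecLin
        (g : Matrix (Fin n ⊕ Fin n) (Fin n ⊕ Fin n) F)) = L} : ℂ)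

section Representations

open Representation
open scoped MonoidAlgebra

variable {k G V W : Type*} [Field k] [AddCommGroup V] [Module k V] [AddCommGroup W] [Module k W]

section Monoid

variable [Monoid G]

lemma isIrreducible_of_finrank_intertwiningMap_eq_one (ρ : Representation k G V)
    [ρ.IsSemisimpleRepresentation] (h : Module.finrank k (IntertwiningMap ρ ρ) = 1) :
    ρ.IsIrreducible := by
  have : Nontrivial ρ.asModule := by
    by_contra! hV
    have : Subsingleton V := hV
    have : Subsingleton (IntertwiningMap ρ ρ) := DFunLike.coe_injective.subsingleton
    simp [Module.finrank_zero_of_subsingleton] at h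
  have : IsSemisimpleModule k[G] ρ.asModule :=
    (isSemisimpleRepresentation_iff_isSemisimpleModule_asModule ρ).1 inferInstance
  have hid : IntertwiningMap.id ρ ≠ 0 := fun h0 =>
    let ⟨v, hv⟩ := exists_ne (0 : ρ.asModule)
    hv (DFunLike.congr_fun h0 v)
  rw [irreducible_iff_isSimpleModule_asModule, isSimpleModule_iff]
  refine { eq_bot_or_eq_top := fun N => or_iff_not_imp_left.2 fun hN => ?_ }
  obtain ⟨C, hC⟩ := exists_isCompl N
  obtain ⟨c, hc⟩ := (finrank_eq_one_iff_of_nonzero' _ hid).1 h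
    ((IntertwiningMap.equivLinearMapAsModule ρ ρ).symm (N.projection C hC))
  have hproj (v : V) : N.projection C hC v = c • v := (DFunLike.congr_fun hc v).symm
  obtain ⟨x, hxN, hx⟩ := N.ne_bot_iff.1 hN
  have hc1 : c = 1 := smul_left_injective k (show (x : V) ≠ 0 from hx) <|
    (hproj x).symm.trans <|
      ((Submodule.projection_eq_self_iff hC x).2 hxN).trans (one_smul k (x : V)).symm
  exact N.eq_top_iff'.2 fun y => (Submodule.projection_eq_self_iff hC y).1 <|
    (hproj y).trans (by rw [hc1]; exact one_smul k (y : V))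

lemma isIrreducible_ofSubmodule' {τ : Representation k G W} {m : Submodule k[G] τ.asModule}
    (hm : IsSimpleModule k[G] m) :
    (Subrepresentation.ofSubmodule' m).toRepresentation.IsIrreducible := by
  let S := Subrepresentation.ofSubmodule' m
  let ι : IntertwiningMap S.toRepresentation τ :=
    S.toSubmodule.subtype.intertwiningMap_of_isIntertwiningMap _ _ fun _ _ => rfl
  let i := IntertwiningMap.equivLinearMapAsModule _ _ ι
  have hi : Function.Injective i := Subtype.val_injective
  have hrange : LinearMap.range i = m := SetLike.coe_injective Subtype.range_coe
  rw [irreducible_iff_isSimpleModule_asModule]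
  rw [← hrange] at hm
  exact IsSimpleModule.congr (LinearEquiv.ofInjective i hi)

lemma exists_isIrreducible_not_le {τ : Representation k G W} [τ.IsSemisimpleRepresentation]
    {N : Subrepresentation τ} (hN : N ≠ ⊤) :
    ∃ S : Subrepresentation τ, S.toRepresentation.IsIrreducible ∧ ¬ S ≤ N := by
  have : IsSemisimpleModule k[G] τ.asModule :=
    (isSemisimpleRepresentation_iff_isSemisimpleModule_asModule τ).1 inferInstance
  contrapose! hN
  let φ := Subrepresentation.subrepresentationSubmoduleOrderIso (ρ := τ)
  rw [← map_eq_top_iff φ, eq_top_iff, ← IsSemisimpleModule.sSup_simples_eq_top]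
  exact sSup_le fun m hm => φ.symm_apply_le.1 (hN (φ.symm m) (isIrreducible_ofSubmodule' hm))

lemma nontrivial_of_isIrreducible (ρ : Representation k G V) [ρ.IsIrreducible] : Nontrivial V :=
  have : IsSimpleModule k[G] ρ.asModule := ρ.irreducible_iff_isSimpleModule_asModule.1 ‹_›
  IsSimpleModule.nontrivial k[G] ρ.asModule

lemma character_eq_one_of_forall_apply_eq {ρ : Representation k G V} [ρ.IsIrreducible] {v : V}
    (hv : v ≠ 0) (h : ∀ g, ρ g v = v) : ρ.character = 1 := by
  let f : IntertwiningMap (trivial k G k) ρ :=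
    (LinearMap.toSpanSingleton k V v).intertwiningMap_of_isIntertwiningMap _ _ fun g c => by
      simp [h g]
  have hf : f ≠ 0 := fun h0 => hv (by simpa [f] using DFunLike.congr_fun h0 1)
  have hspan : ∀ x, ∃ c : k, c • v = x :=
    (IsIrreducible.surjective_or_eq_zero f).resolve_right hf
  ext g
  have hg : ρ g = LinearMap.id := by
    ext x
    obtain ⟨c, rfl⟩ := hspan x
    simp [h g]
  have : FiniteDimensional k V := .of_finrank_eq_succ (finrank_eq_one v hv hspan)
  rw [character, hg, LinearMap.trace_id, finrank_eq_one v hv hspan, Nat.cast_one, Pi.one_apply]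

lemma isTrivial_of_character_eq_one [CharZero k] [FiniteDimensional k V] {ρ : Representation k G V}
    (h : ρ.character = 1) : ρ.IsTrivial := by
  have hV : Module.finrank k V = 1 := by
    have h1 := congr_fun h 1
    rw [char_one, Pi.one_apply] at h1
    exact_mod_cast h1
  refine ⟨fun g => ?_⟩
  obtain ⟨c, hc⟩ := (LinearMap.existsUnique_eq_smul_id_of_finrank_eq_one hV (ρ g)).exists
  have hg : LinearMap.trace k V (ρ g) = 1 := congr_fun h g
  rw [hc, map_smul, LinearMap.trace_id, hV, Nat.cast_one, smul_eq_mul, mul_one] at hg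
  rw [hc, hg, one_smul]

end Monoid

section Permutation

variable [Group G] {X : Type*} [MulAction G X]

lemma character_ofMulAction [Finite X] (g : G) :
    (ofMulAction k G X).character g = Nat.card (MulAction.fixedBy X g) := by
  classical
  have := Fintype.ofFinite X
  let b := MonoidAlgebra.basis X k
  have hdiag (x : X) :
      (LinearMap.toMatrix b b (ofMulAction k G X g)).diag x = if g • x = x then 1 else 0 := by
    rw [Matrix.diag_apply, LinearMap.toMatrix_apply, MonoidAlgebra.basis_apply, ofMulAction_single]
    exact Finsupp.single_apply
  rw [character, LinearMap.trace_eq_matrix_trace k b, Matrix.trace,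
    Finset.sum_congr rfl fun x _ => hdiag x, Finset.sum_boole, ← Fintype.card_subtype,
    Nat.card_eq_fintype_card]
  rfl

lemma exists_intertwiningMap_ofMulAction {σ : Representation k G W} {p : X → W}
    (hp : ∀ g x, σ g (p x) = p (g • x)) :
    ∃ f : IntertwiningMap (ofMulAction k G X) σ, ∀ x, f (MonoidAlgebra.single x 1) = p x := by
  let b := MonoidAlgebra.basis X k
  have hb (x : X) : b.constr k p (MonoidAlgebra.single x 1) = p x := b.constr_basis k p x
  refine ⟨{ b.constr k p with isIntertwining' := fun g => b.ext fun x => ?_ }, hb⟩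
  change b.constr k p (ofMulAction k G X g (MonoidAlgebra.single x 1)) =
    σ g (b.constr k p (MonoidAlgebra.single x 1))
  rw [ofMulAction_single, hb, hb, hp]

lemma two_le_finrank_intertwiningMap_ofMulAction [Finite X] [FiniteDimensional k W]
    {σ : Representation k G W} {u : W} (hu : u ∈ σ.invariants) (hu0 : u ≠ 0) {p : X → W}
    (hp : ∀ g x, σ g (p x) = p (g • x)) {x : X} (hx : p x ∉ σ.invariants) :
    2 ≤ Module.finrank k (IntertwiningMap (ofMulAction k G X) σ) := by
  obtain ⟨f₁, hf₁⟩ := exists_intertwiningMap_ofMulAction (X := X) (p := fun _ => u) fun g _ => hu g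
  obtain ⟨f₂, hf₂⟩ := exists_intertwiningMap_ofMulAction hp
  have hf₁0 : f₁ ≠ 0 := fun h => hu0 (by rw [← hf₁ x, h]; rfl)
  have hli : LinearIndependent k ![f₁, f₂] := by
    refine (LinearIndependent.pair_iff' hf₁0).2 fun c hc => hx ?_
    rw [← hf₂, ← hc, IntertwiningMap.smul_apply, hf₁]
    exact σ.invariants.smul_mem c hu
  simpa using hli.fintype_card_le_finrank

end Permutation

end Representations

section Characters

open Matrix Representation
open scoped ComplexOrder

variable {G : Type*} [Group G]

lemma exists_posDef_conjTranspose_mul_mul [Finite G] {ι : Type*} [Fintype ι] [DecidableEq ι]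
    (R : G →* Matrix ι ι ℂ) : ∃ H : Matrix ι ι ℂ, H.PosDef ∧ ∀ g, (R g)ᴴ * H * R g = H := by
  classical
  have := Fintype.ofFinite G
  refine ⟨∑ h, (R h)ᴴ * R h, ?_, fun g => ?_⟩
  · rw [← Finset.sum_erase_add _ _ (Finset.mem_univ (1 : G)), map_one,
      Matrix.conjTranspose_one, Matrix.one_mul]
    exact Matrix.PosDef.posSemidef_add (Matrix.posSemidef_sum _ fun h _ =>
      Matrix.posSemidef_conjTranspose_mul_self (R h)) Matrix.PosDef.one
  · rw [Finset.mul_sum, Finset.sum_mul]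
    exact Fintype.sum_equiv (Equiv.mulRight g) _ _ fun h => by simp [Matrix.mul_assoc]

lemma star_trace_eq_trace_inv [Finite G] {ι : Type*} [Fintype ι] [DecidableEq ι]
    (R : G →* Matrix ι ι ℂ) (g : G) : star (R g).trace = (R g⁻¹).trace := by
  obtain ⟨H, hH, hR⟩ := exists_posDef_conjTranspose_mul_mul R
  have hdet : IsUnit H.det := (Matrix.isUnit_iff_isUnit_det H).1 hH.isUnit
  have hcomm : (R g)ᴴ * H = H * R g⁻¹ := by
    rw [← hR g, Matrix.mul_assoc _ (R g), ← map_mul, mul_inv_cancel, map_one, Matrix.mul_one, hR]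
  calc star (R g).trace = ((R g)ᴴ * H * H⁻¹).trace := by
        rw [Matrix.mul_nonsing_inv_cancel_right _ _ hdet, Matrix.trace_conjTranspose]
    _ = (R g⁻¹).trace := by
        rw [hcomm, Matrix.trace_mul_comm, Matrix.nonsing_inv_mul_cancel_left _ _ hdet]

variable {V W : Type*} [AddCommGroup V] [Module ℂ V] [FiniteDimensional ℂ V]
  [AddCommGroup W] [Module ℂ W] [FiniteDimensional ℂ W]

lemma exists_matrix_trace_eq_character (ρ : Representation ℂ G V) :
    ∃ R : G →* Matrix (Fin (Module.finrank ℂ V)) (Fin (Module.finrank ℂ V)) ℂ,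
      ∀ g, (R g).trace = ρ.character g :=
  ⟨(LinearMap.toMatrixAlgEquiv (Module.finBasis ℂ V)).toMonoidHom.comp ρ, fun g =>
    (LinearMap.trace_eq_matrix_trace ℂ (Module.finBasis ℂ V) (ρ g)).symm⟩

lemma conj_character [Finite G] (ρ : Representation ℂ G V) (g : G) :
    starRingEnd ℂ (ρ.character g) = ρ.character g⁻¹ := by
  obtain ⟨R, hR⟩ := exists_matrix_trace_eq_character ρ
  rw [← hR, ← hR, starRingEnd_apply, star_trace_eq_trace_inv]

lemma isChar_character (ρ : Representation ℂ G V) : IsChar ρ.character := by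
  obtain ⟨R, hR⟩ := exists_matrix_trace_eq_character ρ
  exact ⟨_, R.toHomUnits, fun g => (hR g).symm⟩

lemma IsChar.exists_representation {χ : G → ℂ} (hχ : IsChar χ) :
    ∃ (d : ℕ) (ρ : Representation ℂ G (Fin d → ℂ)), ρ.character = χ := by
  obtain ⟨d, R, hR⟩ := hχ
  refine ⟨d, (Matrix.toLinAlgEquiv' (R := ℂ)).toMonoidHom.comp ((Units.coeHom _).comp R), ?_⟩
  ext g
  rw [hR]
  exact Matrix.trace_toLin'_eq _

lemma character_mul_conj_character [Finite G] (ρ : Representation ℂ G V) :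
    ρ.character * (fun g => starRingEnd ℂ (ρ.character g)) = (linHom ρ ρ).character := by
  ext g
  rw [char_linHom, Pi.mul_apply, conj_character, mul_comm]

lemma charInner_character [Finite G] (σ : Representation ℂ G W) (ρ : Representation ℂ G V) :
    charInner σ.character ρ.character = Module.finrank ℂ (IntertwiningMap ρ σ) := by
  have := Fintype.ofFinite G
  have hG : (Nat.card G : ℂ) ≠ 0 := Nat.cast_ne_zero.2 Nat.card_pos.ne'
  have := invertibleOfNonzero hG
  simp_rw [← card_inv_mul_sum_char_mul_char_eq_finrank, charInner, finsum_eq_sum_of_fintype,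
    conj_character]

lemma isConstituent_character_of_ne_zero [Finite G] {σ : Representation ℂ G W}
    {ρ : Representation ℂ G V} {f : IntertwiningMap ρ σ} (hf : f ≠ 0) :
    IsConstituent ρ.character σ.character := by
  have : Nontrivial (IntertwiningMap ρ σ) := ⟨f, 0, hf⟩
  rw [IsConstituent, charInner_character, Nat.cast_ne_zero]
  exact Module.finrank_pos.ne'

lemma isIrrChar_character [Finite G] (ρ : Representation ℂ G V) [ρ.IsIrreducible] :
    IsIrrChar ρ.character :=
  ⟨isChar_character ρ, by rw [charInner_character, IsIrreducible.finrank_intertwiningMap_self,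
    Nat.cast_one]⟩

lemma IsIrrChar.exists_isIrreducible [Finite G] {χ : G → ℂ} (hχ : IsIrrChar χ) :
    ∃ (d : ℕ) (ρ : Representation ℂ G (Fin d → ℂ)), ρ.IsIrreducible ∧ ρ.character = χ := by
  obtain ⟨d, ρ, rfl⟩ := hχ.1.exists_representation
  have : NeZero (Nat.card G : ℂ) := ⟨Nat.cast_ne_zero.2 Nat.card_pos.ne'⟩
  have h := hχ.2
  rw [charInner_character] at h
  exact ⟨d, ρ, isIrreducible_of_finrank_intertwiningMap_eq_one ρ (mod_cast h), rfl⟩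

lemma exists_isIrrChar_ne_one_of_notMem_invariants [Finite G] {τ : Representation ℂ G V}
    {σ : Representation ℂ G W} (f : IntertwiningMap τ σ) {x : V} (hx : f x ∉ σ.invariants) :
    ∃ θ : G → ℂ, IsIrrChar θ ∧ θ ≠ 1 ∧ IsConstituent θ τ.character ∧
      IsConstituent θ σ.character := by
  have : NeZero (Nat.card G : ℂ) := ⟨Nat.cast_ne_zero.2 Nat.card_pos.ne'⟩
  let N : Subrepresentation τ :=
    { toSubmodule := σ.invariants.comap f.toLinearMap
      apply_mem_toSubmodule := fun g v hv => by
        change f v ∈ σ.invariants at hv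
        change f (τ g v) ∈ σ.invariants
        rwa [f.isIntertwining, hv g] }
  have hN : N ≠ ⊤ := fun h => hx (show x ∈ N from h ▸ trivial)
  obtain ⟨S, hS, hSN⟩ := exists_isIrreducible_not_le hN
  obtain ⟨y, hyS, hyN⟩ := SetLike.not_le_iff_exists.1 hSN
  let ι : IntertwiningMap S.toRepresentation τ :=
    S.toSubmodule.subtype.intertwiningMap_of_isIntertwiningMap _ _ fun _ _ => rfl
  have hfι : f.comp ι ≠ 0 := fun h => hyN <| by
    have hfy : f y = 0 := DFunLike.congr_fun h (⟨y, hyS⟩ : S.toSubmodule)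
    exact (hfy ▸ σ.invariants.zero_mem : f y ∈ σ.invariants)
  have hι : ι ≠ 0 := fun h => hfι (IntertwiningMap.ext (by rw [h]; exact LinearMap.comp_zero _))
  refine ⟨_, isIrrChar_character S.toRepresentation, fun h => hyN fun g => ?_,
    isConstituent_character_of_ne_zero hι, isConstituent_character_of_ne_zero hfι⟩
  have := isTrivial_of_character_eq_one h
  have hgy : τ g y = y := congr_arg Subtype.val (S.toRepresentation.isTrivial_apply g ⟨y, hyS⟩)
  exact (f.isIntertwining _ _ g y).symm.trans (congr_arg f hgy)

end Characters

section FiniteFields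

open Module

lemma exists_ne_zero_eval_eq_zero {ι F : Type*} [Fintype ι] [Field F] [Finite F]
    {f : MvPolynomial ι F} (hdeg : f.totalDegree < Fintype.card ι)
    (h0 : MvPolynomial.eval 0 f = 0) : ∃ x, x ≠ 0 ∧ MvPolynomial.eval x f = 0 := by
  classical
  have := Fintype.ofFinite F
  obtain ⟨p, _⟩ := CharP.exists F
  have hcard : 1 < Fintype.card {x : ι → F // MvPolynomial.eval x f = 0} :=
    (CharP.char_is_prime F p).one_lt.trans_le <|
      Nat.le_of_dvd (Fintype.card_pos_iff.2 ⟨⟨0, h0⟩⟩) (char_dvd_card_solutions p hdeg)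
  obtain ⟨⟨x, hx⟩, hne⟩ := Fintype.exists_ne_of_one_lt_card hcard ⟨0, h0⟩
  exact ⟨x, fun h => hne (Subtype.ext h), hx⟩

variable {F V : Type*} [Field F] [Finite F] [AddCommGroup V] [Module F V]

lemma not_anisotropic_of_two_lt_finrank (Q : QuadraticForm F V) (hV : 2 < finrank F V) :
    ¬ Q.Anisotropic := by
  have : Module.Finite F V := finite_of_finrank_pos (by lia)
  obtain ⟨B, rfl⟩ := LinearMap.BilinMap.toQuadraticMap_surjective Q
  let b := finBasis F V
  let f : MvPolynomial (Fin (finrank F V)) F :=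
    ∑ i, ∑ j, MvPolynomial.X i * MvPolynomial.X j * MvPolynomial.C (B (b j) (b i))
  have hf (x) : MvPolynomial.eval x f = B (b.equivFun.symm x) (b.equivFun.symm x) := by
    simp [f, b.equivFun_symm_apply, Finset.mul_sum, mul_assoc]
  have hdeg : f.totalDegree ≤ 2 :=
    MvPolynomial.totalDegree_finsetSum_le fun i _ =>
      MvPolynomial.totalDegree_finsetSum_le fun j _ =>
        (MvPolynomial.totalDegree_mul _ _).trans <| by
          rw [MvPolynomial.totalDegree_C, add_zero]
          refine (MvPolynomial.totalDegree_mul _ _).trans ?_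
          rw [MvPolynomial.totalDegree_X, MvPolynomial.totalDegree_X]
  obtain ⟨x, hx0, hx⟩ := exists_ne_zero_eval_eq_zero (f := f)
    (by rw [Fintype.card_fin]; lia) (by rw [hf, map_zero, map_zero])
  rw [hf] at hx
  exact fun hQ => hx0 (b.equivFun.symm.map_eq_zero_iff.1 (hQ _ hx))

variable (F) in
lemma exists_addChar_eq_comp_dual [Finite V] :
    ∃ ψ : AddChar F ℂ, ∀ χ : AddChar V ℂ, ∃ f : Dual F V, ∀ v, χ v = ψ (f v) := by
  obtain ⟨ψ, hψ⟩ := AddChar.exists_apply_ne_zero.2 (one_ne_zero : (1 : F) ≠ 0)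
  let Φ : Dual F V → AddChar V ℂ := fun f => ψ.compAddMonoidHom f.toAddMonoidHom
  have hΦ : Function.Injective Φ := by
    intro f f' h
    by_contra! hf
    obtain ⟨v, hv⟩ := LinearMap.surjective (sub_ne_zero.2 hf) 1
    have hv' : ψ (f v) = ψ (f' v) := DFunLike.congr_fun h v
    apply hψ
    rw [← hv, LinearMap.sub_apply, AddChar.map_sub_eq_div, hv', div_self (ψ.val_isUnit _).ne_zero]
  have hcard : Nat.card (AddChar V ℂ) ≤ Nat.card (Dual F V) := by
    have := Fintype.ofFinite V
    rw [Nat.card_eq_fintype_card, AddChar.card_eq, ← Nat.card_eq_fintype_card,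
      natCard_eq_pow_finrank (K := F), natCard_eq_pow_finrank (K := F) (V := Dual F V),
      Subspace.dual_finrank_eq]
  refine ⟨ψ, fun χ => ?_⟩
  obtain ⟨f, rfl⟩ := (hΦ.bijective_of_nat_card_le hcard).2 χ
  exact ⟨f, fun v => rfl⟩

end FiniteFields

lemma exists_addChar_forall_apply_eq_smul {A V : Type*} [AddCommGroup A] [Finite A]
    [AddCommGroup V] [Module ℂ V] [Nontrivial V] (σ : Representation ℂ (Multiplicative A) V) :
    ∃ (χ : AddChar A ℂ) (v : V), v ≠ 0 ∧ ∀ a, σ (.ofAdd a) v = χ a • v := by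
  classical
  have := Fintype.ofFinite A
  obtain ⟨v, hv⟩ := exists_ne (0 : V)
  let p (χ : AddChar A ℂ) : V := ∑ a, χ (-a) • σ (.ofAdd a) v
  have hsum : ∑ χ, p χ = (Fintype.card A : ℂ) • v := by
    rw [Finset.sum_comm]
    simp_rw [← Finset.sum_smul, AddChar.sum_apply_eq_ite]
    simp
  obtain ⟨χ, -, hχ⟩ := Finset.exists_ne_zero_of_sum_ne_zero
    (hsum ▸ smul_ne_zero (Nat.cast_ne_zero.2 Fintype.card_ne_zero) hv)
  refine ⟨χ, p χ, hχ, fun b => ?_⟩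
  rw [map_sum, Finset.smul_sum]
  refine Fintype.sum_equiv (Equiv.addLeft b) _ _ fun a => ?_
  rw [Equiv.coe_addLeft, map_smul, smul_smul, ofAdd_add, map_mul, Module.End.mul_apply,
    ← AddChar.map_add_eq_mul, neg_add, add_neg_cancel_left]

section Symplectic

open Matrix Matrix.Module

section CommRing

variable {l R : Type*} [Fintype l] [DecidableEq l] [CommRing R]

lemma symplecticGroup_smul_def (g : symplecticGroup l R) (v : l ⊕ l → R) : g • v = g.1 *ᵥ v :=
  rfl

instance : SMulCommClass (symplecticGroup l R) R (l ⊕ l → R) where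
  smul_comm g a v := mulVec_smul g.1 a v

instance : FaithfulSMul (symplecticGroup l R) (l ⊕ l → R) where
  eq_of_smul_eq_smul h := Subtype.ext (mulVec_injective (funext h))

variable (l R) in
/-- The alternating form `(u, v) ↦ uᵀ J v` on `R²ˡ` preserved by `symplecticGroup l R`. -/
def symplecticForm : LinearMap.BilinForm R (l ⊕ l → R) :=
  toBilin' (J l R)

lemma symplecticForm_apply (u v : l ⊕ l → R) : symplecticForm l R u v = u ⬝ᵥ J l R *ᵥ v :=
  toBilin'_apply' _ _ _

lemma symplecticForm_sumElim (x y x' y' : l → R) :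
    symplecticForm l R (Sum.elim x y) (Sum.elim x' y') = y ⬝ᵥ x' - x ⬝ᵥ y' := by
  simp only [symplecticForm_apply, J, fromBlocks_mulVec, Sum.elim_comp_inl, Sum.elim_comp_inr,
    zero_mulVec, neg_mulVec, one_mulVec, zero_add, add_zero, sumElim_dotProduct_sumElim,
    dotProduct_neg]
  ring

lemma symplecticForm_isAlt : (symplecticForm l R).IsAlt := fun u => by
  rw [← Sum.elim_comp_inl_inr u, symplecticForm_sumElim, dotProduct_comm, sub_self]

lemma symplecticForm_nondegenerate : (symplecticForm l R).Nondegenerate :=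
  (Nondegenerate.of_det_mem_nonZeroDivisors (isUnit_det_J l R).mem_nonZeroDivisors).toBilin'

lemma mem_symplecticGroup_iff {A : Matrix (l ⊕ l) (l ⊕ l) R} :
    A ∈ symplecticGroup l R ↔
      ∀ u v, symplecticForm l R (A *ᵥ u) (A *ᵥ v) = symplecticForm l R u v := by
  rw [SymplecticGroup.mem_iff', ← (toBilin' (R₁ := R)).injective.eq_iff, ← toBilin'_comp,
    LinearMap.ext_iff₂]
  rfl

lemma symplecticForm_smul_smul (g : symplecticGroup l R) (u v : l ⊕ l → R) :
    symplecticForm l R (g • u) (g • v) = symplecticForm l R u v :=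
  mem_symplecticGroup_iff.1 g.2 u v

lemma one_add_smul_vecMulVec_mulVec (a : R) (w v : l ⊕ l → R) :
    (1 + a • vecMulVec w (w ᵥ* J l R)) *ᵥ v = v + (a * symplecticForm l R w v) • w := by
  rw [add_mulVec, one_mulVec, smul_mulVec, vecMulVec_mulVec, ← dotProduct_mulVec,
    ← symplecticForm_apply, op_smul_eq_smul, smul_smul]

/-- The symplectic transvection `v ↦ v + a ⟨w, v⟩ w`. -/
def symplecticTransvection (a : R) (w : l ⊕ l → R) : symplecticGroup l R :=
  ⟨1 + a • vecMulVec w (w ᵥ* J l R), mem_symplecticGroup_iff.2 fun u v => by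
    simp only [one_add_smul_vecMulVec_mulVec, map_add, LinearMap.add_apply, map_smul,
      LinearMap.smul_apply, smul_eq_mul, symplecticForm_isAlt w, ← symplecticForm_isAlt.neg_eq w u]
    ring⟩

lemma symplecticTransvection_smul (a : R) (w v : l ⊕ l → R) :
    symplecticTransvection a w • v = v + (a * symplecticForm l R w v) • w :=
  one_add_smul_vecMulVec_mulVec a w v

lemma symplecticTransvection_add (a b : R) (w : l ⊕ l → R) :
    symplecticTransvection (a + b) w =
      symplecticTransvection a w * symplecticTransvection b w := by
  refine eq_of_smul_eq_smul fun v : l ⊕ l → R => ?_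
  simp only [mul_smul, symplecticTransvection_smul, map_add, map_smul, symplecticForm_isAlt w,
    smul_zero]
  module

lemma symplecticTransvection_smul_right (a c : R) (w : l ⊕ l → R) :
    symplecticTransvection a (c • w) = symplecticTransvection (a * c ^ 2) w := by
  refine eq_of_smul_eq_smul fun v : l ⊕ l → R => ?_
  simp only [symplecticTransvection_smul, map_smul, LinearMap.smul_apply, smul_eq_mul]
  module

lemma symplecticTransvection_zero_right (a : R) :
    symplecticTransvection a (0 : l ⊕ l → R) = 1 :=
  eq_of_smul_eq_smul fun v : l ⊕ l → R => by
    rw [symplecticTransvection_smul, smul_zero, add_zero, one_smul]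

lemma symplecticTransvection_group_smul (g : symplecticGroup l R) (a : R) (w : l ⊕ l → R) :
    symplecticTransvection a (g • w) = g * symplecticTransvection a w * g⁻¹ := by
  rw [eq_mul_inv_iff_mul_eq]
  refine eq_of_smul_eq_smul fun v : l ⊕ l → R => ?_
  rw [mul_smul, mul_smul, symplecticTransvection_smul, symplecticTransvection_smul,
    symplecticForm_smul_smul, smul_add, smul_comm g]

lemma symplecticTransvection_sub_smul {u v : l ⊕ l → R} {a : R}
    (ha : a * symplecticForm l R v u = 1) : symplecticTransvection a (v - u) • u = v := by
  rw [symplecticTransvection_smul, map_sub, LinearMap.sub_apply, symplecticForm_isAlt u, sub_zero,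
    ha, one_smul, add_sub_cancel]

end CommRing

section Field

variable {l F : Type*} [Fintype l] [DecidableEq l] [Field F]

lemma exists_symplecticForm_ne_zero_and_ne_zero {u v : l ⊕ l → F} (hu : u ≠ 0) (hv : v ≠ 0) :
    ∃ w, symplecticForm l F u w ≠ 0 ∧ symplecticForm l F v w ≠ 0 := by
  obtain ⟨x, hx⟩ : ∃ x, symplecticForm l F u x ≠ 0 := by
    contrapose! hu
    exact symplecticForm_nondegenerate.1 u hu
  obtain ⟨y, hy⟩ : ∃ y, symplecticForm l F v y ≠ 0 := by
    contrapose! hv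
    exact symplecticForm_nondegenerate.1 v hv
  by_cases hvx : symplecticForm l F v x = 0
  · by_cases huy : symplecticForm l F u y = 0
    · exact ⟨x + y, by rwa [map_add, huy, add_zero], by rwa [map_add, hvx, zero_add]⟩
    · exact ⟨y, huy, hy⟩
  · exact ⟨x, hx, hvx⟩

lemma exists_symplecticGroup_smul_eq {u v : l ⊕ l → F} (hu : u ≠ 0) (hv : v ≠ 0) :
    ∃ g : symplecticGroup l F, g • u = v := by
  obtain ⟨w, huw, hvw⟩ := exists_symplecticForm_ne_zero_and_ne_zero hu hv
  rw [← symplecticForm_isAlt.neg_eq, neg_ne_zero] at huw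
  refine ⟨symplecticTransvection (symplecticForm l F v w)⁻¹ (v - w) *
    symplecticTransvection (symplecticForm l F w u)⁻¹ (w - u), ?_⟩
  rw [mul_smul, symplecticTransvection_sub_smul (inv_mul_cancel₀ huw),
    symplecticTransvection_sub_smul (inv_mul_cancel₀ hvw)]

/-- The subspace of vectors fixed by a symplectic matrix. -/
abbrev symplecticFixedSubmodule (g : symplecticGroup l F) : Submodule F (l ⊕ l → F) :=
  (DistribSMul.toLinearMap F (l ⊕ l → F) g).fixedSubmodule

lemma symplecticFixedSubmodule_le_symplecticTransvection_mul (g : symplecticGroup l F) (a : F)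
    (y : l ⊕ l → F) : symplecticFixedSubmodule g ≤
      symplecticFixedSubmodule (symplecticTransvection a (y - g • y) * g) := by
  intro x (hx : g • x = x)
  have hyx : symplecticForm l F (g • y) x = symplecticForm l F y x := by
    conv_lhs => rw [← hx, symplecticForm_smul_smul]
  change (_ * g) • x = x
  rw [mul_smul, hx, symplecticTransvection_smul, map_sub, LinearMap.sub_apply, hyx, sub_self,
    mul_zero, zero_smul, add_zero]

lemma symplecticFixedSubmodule_lt_symplecticTransvection_mul {g : symplecticGroup l F}
    {u : l ⊕ l → F} (hu : symplecticForm l F u (g • u) ≠ 0) :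
    symplecticFixedSubmodule g < symplecticFixedSubmodule
      (symplecticTransvection (symplecticForm l F u (g • u))⁻¹ (u - g • u) * g) := by
  refine SetLike.lt_iff_le_and_exists.2
    ⟨symplecticFixedSubmodule_le_symplecticTransvection_mul g _ u, u, ?_, fun h => hu ?_⟩
  · change (_ * g) • u = u
    rw [mul_smul, symplecticTransvection_sub_smul (inv_mul_cancel₀ hu)]
  · change g • u = u at h
    rw [h, symplecticForm_isAlt u]

lemma exists_symplecticForm_symplecticTransvection_mul_smul_ne_zero {g : symplecticGroup l F}
    {y : l ⊕ l → F} (hy : g • y ≠ y) (hg : ∀ u, symplecticForm l F u (g • u) = 0) :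
    ∃ u, symplecticForm l F u ((symplecticTransvection 1 (y - g • y) * g) • u) ≠ 0 := by
  set w := y - g • y
  have hw : w ≠ 0 := sub_ne_zero.2 hy.symm
  obtain ⟨u, hwu, hgwu⟩ :=
    exists_symplecticForm_ne_zero_and_ne_zero hw (smul_ne_zero_iff_ne g⁻¹ |>.2 hw)
  rw [← symplecticForm_smul_smul g, smul_inv_smul] at hgwu
  refine ⟨u, ?_⟩
  rw [mul_smul, symplecticTransvection_smul, map_add, hg, zero_add, one_mul, map_smul,
    ← symplecticForm_isAlt.neg_eq w u]
  exact mul_ne_zero hgwu (neg_ne_zero.2 hwu)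

variable (l F) in
/-- The subgroup of the symplectic group generated by all symplectic transvections. -/
def symplecticTransvectionSubgroup : Subgroup (symplecticGroup l F) :=
  Subgroup.closure {g | ∃ a w, symplecticTransvection a w = g}

lemma symplecticTransvection_mem_symplecticTransvectionSubgroup (a : F) (w : l ⊕ l → F) :
    symplecticTransvection a w ∈ symplecticTransvectionSubgroup l F :=
  Subgroup.subset_closure ⟨a, w, rfl⟩

lemma exists_symplecticFixedSubmodule_lt {g : symplecticGroup l F} (hg : g ≠ 1) :
    ∃ h ∈ symplecticTransvectionSubgroup l F,
      symplecticFixedSubmodule g < symplecticFixedSubmodule (h * g) := by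
  by_cases hgu : ∃ u, symplecticForm l F u (g • u) ≠ 0
  · obtain ⟨u, hu⟩ := hgu
    exact ⟨_, symplecticTransvection_mem_symplecticTransvectionSubgroup _ _,
      symplecticFixedSubmodule_lt_symplecticTransvection_mul hu⟩
  · push Not at hgu
    obtain ⟨y, hy⟩ : ∃ y : l ⊕ l → F, g • y ≠ y := by
      contrapose! hg
      exact eq_of_smul_eq_smul fun y : l ⊕ l → F => by rw [hg, one_smul]
    obtain ⟨u, hu⟩ := exists_symplecticForm_symplecticTransvection_mul_smul_ne_zero hy hgu
    have hlt := (symplecticFixedSubmodule_le_symplecticTransvection_mul g 1 y).trans_lt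
      (symplecticFixedSubmodule_lt_symplecticTransvection_mul hu)
    rw [← mul_assoc] at hlt
    exact ⟨_, mul_mem (symplecticTransvection_mem_symplecticTransvectionSubgroup _ _)
      (symplecticTransvection_mem_symplecticTransvectionSubgroup _ _), hlt⟩

theorem symplecticTransvectionSubgroup_eq_top : symplecticTransvectionSubgroup l F = ⊤ := by
  suffices ∀ (W : Submodule F (l ⊕ l → F)) (g : symplecticGroup l F),
      symplecticFixedSubmodule g = W → g ∈ symplecticTransvectionSubgroup l F from
    (Subgroup.eq_top_iff' _).2 fun g => this _ g rfl
  intro W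
  induction W using WellFoundedGT.induction with
  | ind W ih =>
    rintro g rfl
    by_cases hg : g = 1
    · exact hg ▸ one_mem _
    · obtain ⟨h, hh, hlt⟩ := exists_symplecticFixedSubmodule_lt hg
      exact ((symplecticTransvectionSubgroup l F).mul_mem_cancel_left hh).1 (ih _ hlt _ rfl)

end Field

end Symplectic

section Siegel

open Matrix Matrix.Module

section CommRing

variable {l R : Type*} [CommRing R]

variable (l R) in
/-- The module of symmetric matrices, which parametrizes the Siegel unipotent radical. -/
def symmetricMatrices : Submodule R (Matrix l l R) where
  carrier := {A | A.IsSymm}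
  add_mem' := IsSymm.add
  zero_mem' := isSymm_zero
  smul_mem' c _ := (IsSymm.smul · c)

lemma mem_symmetricMatrices {A : Matrix l l R} : A ∈ symmetricMatrices l R ↔ A.IsSymm :=
  Iff.rfl

/-- The symmetric matrix `x xᵀ`. -/
def symmetricSquare (x : l → R) : symmetricMatrices l R :=
  ⟨vecMulVec x x, mem_symmetricMatrices.2 (transpose_vecMulVec x x)⟩

variable [Fintype l] [DecidableEq l]

variable (l R) in
/-- The embedding `A ↦ [1, A; 0, 1]` of the symmetric matrices onto the unipotent radical of the
Siegel parabolic subgroup. -/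
def siegelUnipotent : Multiplicative (symmetricMatrices l R) →* symplecticGroup l R where
  toFun A := ⟨fromBlocks 1 A.toAdd 0 1, SymplecticGroup.fromBlocks_mem_iff.2 (by
    simpa using (mem_symmetricMatrices.1 A.toAdd.2).eq)⟩
  map_one' := Subtype.ext fromBlocks_one
  map_mul' A B := Subtype.ext <| by
    simp [fromBlocks_multiply, add_comm]

lemma siegelUnipotent_smul_symmetricSquare (a : R) (x : l → R) :
    siegelUnipotent l R (.ofAdd (a • symmetricSquare x)) =
      symplecticTransvection (-a) (Sum.elim x 0) := by
  refine eq_of_smul_eq_smul fun v : l ⊕ l → R => ?_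
  rw [symplecticTransvection_smul, ← Sum.elim_comp_inl_inr v, symplecticForm_sumElim,
    symplecticGroup_smul_def]
  ext (i | i) <;>
    simp [siegelUnipotent, symmetricSquare, fromBlocks_mulVec, smul_mulVec, vecMulVec_mulVec,
      mul_assoc]

end CommRing

theorem exists_forall_symplecticTransvection_apply_eq {l F V : Type*} [Fintype l] [DecidableEq l]
    [Field F] [Finite F] [AddCommGroup V] [Module ℂ V] [Nontrivial V] (hl : 2 < Fintype.card l)
    (ρ : Representation ℂ (symplecticGroup l F) V) :
    ∃ w, w ≠ 0 ∧ ∃ v, v ≠ 0 ∧ ∀ a, ρ (symplecticTransvection a w) v = v := by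
  obtain ⟨χ, v, hv, hχ⟩ := exists_addChar_forall_apply_eq_smul (ρ.comp (siegelUnipotent l F))
  obtain ⟨ψ, hψ⟩ := exists_addChar_eq_comp_dual F (V := symmetricMatrices l F)
  obtain ⟨f, hf⟩ := hψ χ
  obtain ⟨f', hf'⟩ := f.exists_extend
  have hQ := not_anisotropic_of_two_lt_finrank
    (LinearMap.BilinMap.toQuadraticMap ((vecMulVecBilin F F).compr₂ f')) (by simpa using hl)
  obtain ⟨x, hQx, hx⟩ : ∃ x, f (symmetricSquare x) = 0 ∧ x ≠ 0 := by
    simpa [QuadraticMap.Anisotropic, ← hf', symmetricSquare] using hQ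
  refine ⟨Sum.elim x 0, fun h => hx ?_, v, hv, fun a => ?_⟩
  · simpa using congrArg (· ∘ Sum.inl) h
  · have := hχ ((-a) • symmetricSquare x)
    rwa [hf, f.map_smul, hQx, smul_zero, AddChar.map_zero_eq_one, one_smul, MonoidHom.comp_apply,
      siegelUnipotent_smul_symmetricSquare, neg_neg] at this

end Siegel

section LineOperator

open Matrix Matrix.Module
open scoped LinearAlgebra.Projectivization

lemma projectivization_submodule_smul {G K V : Type*} [Group G] [DivisionRing K] [AddCommGroup V]
    [Module K V] [DistribMulAction G V] [SMulCommClass G K V] (g : G) (L : ℙ K V) :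
    (g • L).submodule = L.submodule.map (DistribSMul.toLinearMap K V g) := by
  induction L using Projectivization.ind with
  | h w hw =>
    rw [Projectivization.smul_mk, Projectivization.submodule_mk, Projectivization.submodule_mk,
      Submodule.map_span, Set.image_singleton]
    rfl

variable {l F k V : Type*} [Fintype l] [DecidableEq l] [Field F] [CommSemiring k]
  [AddCommMonoid V] [Module k V]

lemma forall_apply_eq_of_forall_symplecticTransvection_apply_eq
    {ρ : Representation k (symplecticGroup l F) V} {v : V}
    (hv : ∀ a w, ρ (symplecticTransvection a w) v = v) (g : symplecticGroup l F) : ρ g v = v := by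
  have hg : g ∈ symplecticTransvectionSubgroup l F :=
    symplecticTransvectionSubgroup_eq_top (l := l) (F := F) ▸ Subgroup.mem_top g
  induction hg using Subgroup.closure_induction with
  | mem _ h => obtain ⟨a, w, rfl⟩ := h; exact hv a w
  | one => rw [map_one, Module.End.one_apply]
  | mul g h _ _ hg hh => rw [map_mul, Module.End.mul_apply, hh, hg]
  | inv g _ hg => conv_lhs => rw [← hg, ρ.inv_self_apply]

variable [Fintype F] (ρ : Representation k (symplecticGroup l F) V)

/-- The operator `∑ a, ρ (t_{a, w})`, a multiple of the projection onto the vectors fixed by the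
root subgroup of all symplectic transvections in the direction `w`. -/
def transvectionSum (w : l ⊕ l → F) : V →ₗ[k] V :=
  ∑ a, ρ (symplecticTransvection a w)

lemma transvectionSum_smul {c : F} (hc : c ≠ 0) (w : l ⊕ l → F) :
    transvectionSum ρ (c • w) = transvectionSum ρ w := by
  simp only [transvectionSum, symplecticTransvection_smul_right]
  exact Fintype.sum_equiv (Equiv.mulRight₀ (c ^ 2) (pow_ne_zero 2 hc)) _ _ fun a => rfl

lemma linHom_transvectionSum (g : symplecticGroup l F) (w : l ⊕ l → F) :
    ρ.linHom ρ g (transvectionSum ρ w) = transvectionSum ρ (g • w) := by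
  simp only [transvectionSum, symplecticTransvection_group_smul, map_mul, map_sum]
  rfl

lemma apply_symplecticTransvection_transvectionSum (a : F) (w : l ⊕ l → F) (v : V) :
    ρ (symplecticTransvection a w) (transvectionSum ρ w v) = transvectionSum ρ w v := by
  simp only [transvectionSum, LinearMap.sum_apply, map_sum, ← Module.End.mul_apply, ← map_mul,
    ← symplecticTransvection_add]
  exact Fintype.sum_equiv (Equiv.addLeft a) _ _ fun b => rfl

variable {ρ}

lemma transvectionSum_apply_eq_card_smul {w : l ⊕ l → F} {v : V}
    (hv : ∀ a, ρ (symplecticTransvection a w) v = v) :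
    transvectionSum ρ w v = (Fintype.card F : k) • v := by
  simp [transvectionSum, LinearMap.sum_apply, hv, Nat.cast_smul_eq_nsmul]

lemma apply_transvectionSum_of_forall_linHom_eq {w : l ⊕ l → F} (hw : w ≠ 0)
    (h : ∀ g, ρ.linHom ρ g (transvectionSum ρ w) = transvectionSum ρ w) (v : V)
    (g : symplecticGroup l F) :
    ρ g (transvectionSum ρ w v) = transvectionSum ρ w v := by
  refine forall_apply_eq_of_forall_symplecticTransvection_apply_eq (fun a u => ?_) g
  rcases eq_or_ne u 0 with rfl | hu
  · rw [symplecticTransvection_zero_right, map_one, Module.End.one_apply]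
  · obtain ⟨g, rfl⟩ := exists_symplecticGroup_smul_eq hw hu
    rw [← h g, linHom_transvectionSum, apply_symplecticTransvection_transvectionSum]

variable (ρ) in
/-- `transvectionSum` as a function of the line spanned by the direction. -/
def lineTransvectionSum : ℙ F (l ⊕ l → F) → (V →ₗ[k] V) :=
  Projectivization.lift (fun w => transvectionSum ρ w) <| by
    rintro ⟨_, hw⟩ ⟨w, -⟩ c rfl
    exact transvectionSum_smul ρ (left_ne_zero_of_smul hw) w

lemma lineTransvectionSum_mk {w : l ⊕ l → F} (hw : w ≠ 0) :
    lineTransvectionSum ρ (.mk F w hw) = transvectionSum ρ w :=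
  Projectivization.lift_mk ..

lemma linHom_lineTransvectionSum (g : symplecticGroup l F) (L : ℙ F (l ⊕ l → F)) :
    ρ.linHom ρ g (lineTransvectionSum ρ L) = lineTransvectionSum ρ (g • L) := by
  induction L using Projectivization.ind with
  | h w hw => rw [Projectivization.smul_mk, lineTransvectionSum_mk, lineTransvectionSum_mk,
      linHom_transvectionSum]

theorem transvectionSum_notMem_invariants {k V : Type*} [Field k] [CharZero k]
    [AddCommGroup V] [Module k V] {ρ : Representation k (symplecticGroup l F) V}
    [ρ.IsIrreducible] (hρ : ρ.character ≠ 1)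
    {w : l ⊕ l → F} (hw : w ≠ 0) {v : V} (hv : v ≠ 0)
    (hwv : ∀ a, ρ (symplecticTransvection a w) v = v) :
    transvectionSum ρ w ∉ (ρ.linHom ρ).invariants := fun h => by
  have hv' : transvectionSum ρ w v ≠ 0 := by
    rw [transvectionSum_apply_eq_card_smul hwv]
    exact smul_ne_zero (Nat.cast_ne_zero.2 Fintype.card_ne_zero) hv
  exact hρ (character_eq_one_of_forall_apply_eq hv'
    (apply_transvectionSum_of_forall_linHom_eq hw h v))

lemma linesPermChar_eq_character (n : ℕ) :
    linesPermChar F n =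
      (Representation.ofMulAction ℂ (symplecticGroup (Fin n) F)
        (ℙ F (Fin n ⊕ Fin n → F))).character := by
  ext g
  rw [character_ofMulAction, linesPermChar]
  refine congrArg _ (Nat.card_congr ?_)
  refine (Equiv.subtypeSubtypeEquivSubtypeInter _ _).symm.trans ?_
  refine ((Projectivization.equivSubmodule F _).subtypeEquiv fun L => ?_).symm
  change g • L = L ↔ L.submodule.map g.1.mulVecLin = L.submodule
  rw [← Projectivization.submodule_injective.eq_iff, projectivization_submodule_smul]
  rfl

end LineOperator

open scoped ComplexOrder in
/-- **Key step in Lemma 2.2 of Liebeck–Shalev–Tiep.** For `G = Sp_{2n}(q)`, `n ≥ 3`,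
with `π` the permutation character on lines of `𝔽_q^{2n}`: for every nontrivial
irreducible `χ`, `⟨χ·conj χ, π⟩ ≥ 2`; consequently `χ·conj χ` contains a nontrivial
irreducible constituent of `π`. -/
theorem inner_mul_conj_permChar_ge_two (F : Type) [Field F] [Fintype F]
    (n : ℕ) (hn : 3 ≤ n)
    (χ : Matrix.symplecticGroup (Fin n) F → ℂ) (hχ : IsIrrChar χ) (hχ1 : χ ≠ 1) :
    2 ≤ charInner (χ * (fun g => (starRingEnd ℂ) (χ g))) (linesPermChar F n) ∧
    ∃ θ : Matrix.symplecticGroup (Fin n) F → ℂ, IsIrrChar θ ∧ θ ≠ 1 ∧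
      IsConstituent θ (linesPermChar F n) ∧
      IsConstituent θ (χ * (fun g => (starRingEnd ℂ) (χ g))) := by
  obtain ⟨d, ρ, hρ, rfl⟩ := hχ.exists_isIrreducible
  have := nontrivial_of_isIrreducible ρ
  obtain ⟨w, hw, v, hv, hwv⟩ :=
    exists_forall_symplecticTransvection_apply_eq (by rwa [Fintype.card_fin]) ρ
  have hP := transvectionSum_notMem_invariants hχ1 hw hv hwv
  rw [← lineTransvectionSum_mk hw] at hP
  rw [character_mul_conj_character, linesPermChar_eq_character]
  constructor
  · rw [charInner_character]
    exact_mod_cast two_le_finrank_intertwiningMap_ofMulAction (u := LinearMap.id)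
      (fun g => by ext; simp) (fun h => hv (DFunLike.congr_fun h v)) linHom_lineTransvectionSum hP
  · obtain ⟨f, hf⟩ := exists_intertwiningMap_ofMulAction (linHom_lineTransvectionSum (ρ := ρ))
    exact exists_isIrrChar_ne_one_of_notMem_invariants f (hf _ ▸ hP)

end McKayGraphs
end

section
/- Let q = p^f be a prime power, n even, and G = Sp_n(q). Let g ∈ G be semisimple with s = supp(g) satisfying n/2 ≤ s < n. Then the p-part of the order of the centralizer of g in G satisfies |C_G(g)|_p ≤ q^{(n² − ns)/4}. -/
namespace McKayGraphs

/-- The support of a matrix `g`: `supp(g) = dim V − max_{x ∈ 𝔽̄_q^×} dim ker(g − x·I)`,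
the codimension of the largest eigenspace of `g` over the algebraic closure. -/
noncomputable def matSupp {F : Type*} [Field F] {ι : Type*} [Fintype ι]
    (g : Matrix ι ι F) : ℕ :=
  Fintype.card ι -
    ⨆ x : (AlgebraicClosure F)ˣ,
      Module.finrank (AlgebraicClosure F)
        (LinearMap.ker
          ((g.map (algebraMap F (AlgebraicClosure F))).mulVecLin
            - (x : AlgebraicClosure F) • LinearMap.id))

/-!
Let `P` be a Sylow `p`-subgroup of `C_G(g)`, acting on `V = 𝔽_q^n`. As `g` is semisimple, `V` is the
direct sum of the spaces `ker φ(g)`, where `φ` runs over the irreducible factors of `X ^ N - 1` with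
`N` the order of `g`; put `k_φ = dim ker φ(g)`. Choose `φ` with `k_φ` maximal. The `p`-group `P`
fixes some `v ≠ 0` in `ker φ(g)`, hence fixes `L = F[g] v` pointwise, and `L` is irreducible under
`g`, so it is either nondegenerate or totally isotropic. If it is nondegenerate, replace `V` by
`Lᗮ`. If it is totally isotropic, some `w` in some `ker ψ(g)` pairs nontrivially with `v`, and
`L ⊕ F[g] w` is nondegenerate. The orbit of `w` under `P` lies in `w + (Lᗮ ∩ ker ψ(g))`, so the
stabilizer `H` of `w` has index at most `q ^ (k_ψ - deg ψ)`, while passing to the orthogonal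
complement of `L ⊕ F[g] w` lowers `∑ k_θ ^ 2 / deg θ = dim C_{End V}(g)` by at least
`4 (k_ψ - deg ψ)`; this uses `k_ψ ≤ k_φ`. By induction on `dim V`, `4 log_q |P|` is at most
`dim C_{End V}(g)`. Finally `k_θ ≤ (deg θ) (n - s)` for every `θ`, because over the algebraic
closure `θ` is a product of linear factors, so that `dim C_{End V}(g) ≤ n (n - s)`.
-/

open Polynomial Module LinearMap UniqueFactorizationMonoid

section Dimension

variable {F V : Type*} [DivisionRing F] [AddCommGroup V] [Module F V] [FiniteDimensional F V]

lemma finrank_sup_of_disjoint {L M : Submodule F V} (h : Disjoint L M) :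
    finrank F ↥(L ⊔ M) = finrank F L + finrank F M := by
  rw [← Submodule.finrank_sup_add_finrank_inf_eq, h.eq_bot, finrank_bot, add_zero]

lemma add_finrank_inf_le_of_disjoint {L U K : Submodule F V} (hLU : Disjoint L U) (hLK : L ≤ K) :
    finrank F L + finrank F ↥(U ⊓ K) ≤ finrank F K := by
  rw [← finrank_sup_of_disjoint (hLU.mono_right inf_le_left)]
  exact Submodule.finrank_mono (sup_le hLK inf_le_right)

end Dimension

section CyclicSubmodules

variable {F V W : Type*} [Field F] [AddCommGroup V] [Module F V] [AddCommGroup W] [Module F W]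

lemma map_aeval_of_semiconj {T : V →ₗ[F] W} {g : End F V} {g' : End F W}
    (h : ∀ x, T (g x) = g' (T x)) (r : F[X]) (x : V) : T (aeval g r x) = aeval g' r (T x) := by
  induction r using Polynomial.induction_on generalizing x with
  | C a => simp
  | add r s hr hs => simp [hr, hs]
  | monomial n a ih => rw [pow_succ, ← mul_assoc]; simp_all

lemma ker_aeval_mem_invtSubmodule {T g : End F V} (h : Commute T g) (φ : F[X]) :
    ker (aeval g φ) ∈ T.invtSubmodule := by
  intro x hx
  simp_all [← map_aeval_of_semiconj (LinearMap.congr_fun h.eq)]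

/-- The smallest `g`-invariant submodule containing `v`, i.e. the `F[X]`-module spanned by `v` when
`X` acts as `g`. -/
noncomputable def cyclicSubmodule (g : End F V) (v : V) : Submodule F V :=
  range (LinearMap.applyₗ v ∘ₗ (aeval g : F[X] →ₐ[F] End F V).toLinearMap)

lemma mem_cyclicSubmodule {g : End F V} {v x : V} :
    x ∈ cyclicSubmodule g v ↔ ∃ r : F[X], aeval g r v = x := by
  simp [cyclicSubmodule]

lemma self_mem_cyclicSubmodule (g : End F V) (v : V) : v ∈ cyclicSubmodule g v :=
  mem_cyclicSubmodule.2 ⟨1, by simp⟩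

lemma cyclicSubmodule_mem_invtSubmodule (g : End F V) (v : V) :
    cyclicSubmodule g v ∈ g.invtSubmodule := by
  intro x hx
  obtain ⟨r, rfl⟩ := mem_cyclicSubmodule.1 hx
  exact mem_cyclicSubmodule.2 ⟨X * r, by simp⟩

lemma cyclicSubmodule_le {g : End F V} {M : Submodule F V} (hM : M ∈ g.invtSubmodule) {v : V}
    (hv : v ∈ M) : cyclicSubmodule g v ≤ M := by
  intro x hx
  obtain ⟨r, rfl⟩ := mem_cyclicSubmodule.1 hx
  exact aeval_apply_smul_mem_of_le_comap hv r g hM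

lemma eq_self_of_mem_cyclicSubmodule {T g : End F V} (h : Commute T g) {v x : V} (hv : T v = v)
    (hx : x ∈ cyclicSubmodule g v) : T x = x := by
  obtain ⟨r, rfl⟩ := mem_cyclicSubmodule.1 hx
  rw [map_aeval_of_semiconj (LinearMap.congr_fun h.eq), hv]

lemma aeval_apply_eq_zero_iff_dvd {g : End F V} {φ : F[X]} (hφ : Irreducible φ) {v : V}
    (hv : v ∈ ker (aeval g φ)) (hv0 : v ≠ 0) {r : F[X]} : aeval g r v = 0 ↔ φ ∣ r := by
  refine ⟨fun hr => by_contra fun hφr => hv0 ?_, ?_⟩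
  · obtain ⟨a, b, hab⟩ := hφ.coprime_iff_not_dvd.2 hφr
    simpa [mem_ker.1 hv, hr] using (congr(aeval g $hab v)).symm
  · rintro ⟨s, rfl⟩
    simp [mul_comm φ, mem_ker.1 hv]

lemma finrank_cyclicSubmodule {g : End F V} {φ : F[X]} (hφ : Irreducible φ) {v : V}
    (hv : v ∈ ker (aeval g φ)) (hv0 : v ≠ 0) :
    finrank F (cyclicSubmodule g v) = φ.natDegree := by
  have hker : ker (LinearMap.applyₗ v ∘ₗ (aeval g : F[X] →ₐ[F] End F V).toLinearMap) =
      (Ideal.span {φ}).restrictScalars F := by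
    ext r
    simp [aeval_apply_eq_zero_iff_dvd hφ hv hv0, Ideal.mem_span_singleton]
  rw [cyclicSubmodule, ← (LinearMap.quotKerEquivRange _).finrank_eq, hker]
  exact finrank_quotient_span_eq_natDegree

lemma cyclicSubmodule_le_or_disjoint {g : End F V} {φ : F[X]} (hφ : Irreducible φ) {v : V}
    (hv : v ∈ ker (aeval g φ)) {M : Submodule F V} (hM : M ∈ g.invtSubmodule) :
    cyclicSubmodule g v ≤ M ∨ Disjoint (cyclicSubmodule g v) M := by
  refine or_iff_not_imp_right.2 fun hdisj => cyclicSubmodule_le hM ?_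
  obtain ⟨x, hx, hxM, hx0⟩ : ∃ x ∈ cyclicSubmodule g v, x ∈ M ∧ x ≠ 0 := by
    simpa [Submodule.disjoint_def] using hdisj
  obtain ⟨r, rfl⟩ := mem_cyclicSubmodule.1 hx
  have hφr : ¬ φ ∣ r := by
    rintro ⟨s, rfl⟩
    simp [mul_comm φ, mem_ker.1 hv] at hx0
  obtain ⟨a, b, hab⟩ := hφ.coprime_iff_not_dvd.2 hφr
  have hbr : aeval g b (aeval g r v) = v := by
    simpa [mem_ker.1 hv] using congr(aeval g $hab v)
  exact hbr ▸ aeval_apply_smul_mem_of_le_comap hxM b g hM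

end CyclicSubmodules

section PrimaryDecomposition

variable {F V : Type*} [Field F] [AddCommGroup V] [Module F V]

lemma isCoprime_prod_of_pairwise_insert {S : Finset F[X]} {φ : F[X]} (hφ : φ ∉ S)
    (hS : (insert φ S : Set F[X]).Pairwise IsCoprime) : IsCoprime φ (∏ ψ ∈ S, ψ) :=
  IsCoprime.prod_right fun _ hψ =>
    hS (Set.mem_insert _ _) (Set.mem_insert_of_mem _ hψ) (by rintro rfl; exact hφ hψ)

lemma iSup_ker_aeval_eq_ker_aeval_prod (g : End F V) {S : Finset F[X]}
    (hS : (S : Set F[X]).Pairwise IsCoprime) :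
    ⨆ φ ∈ S, ker (aeval g φ) = ker (aeval g (∏ φ ∈ S, φ)) := by
  classical
  induction S using Finset.induction_on with
  | empty => simp [Module.End.one_eq_id]
  | insert φ S hφ ih =>
    rw [Finset.coe_insert] at hS
    rw [Finset.iSup_insert, ih (hS.mono (Set.subset_insert _ _)), Finset.prod_insert hφ]
    exact sup_ker_aeval_eq_ker_aeval_mul_of_coprime g (isCoprime_prod_of_pairwise_insert hφ hS)

lemma sum_finrank_ker_aeval_le [FiniteDimensional F V] (g : End F V) {S : Finset F[X]}
    (hS : (S : Set F[X]).Pairwise IsCoprime) :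
    ∑ φ ∈ S, finrank F (ker (aeval g φ)) ≤ finrank F (ker (aeval g (∏ φ ∈ S, φ))) := by
  classical
  induction S using Finset.induction_on with
  | empty => simp
  | insert φ S hφ ih =>
    rw [Finset.coe_insert] at hS
    have hcop := isCoprime_prod_of_pairwise_insert hφ hS
    rw [Finset.sum_insert hφ, Finset.prod_insert hφ,
      ← sup_ker_aeval_eq_ker_aeval_mul_of_coprime g hcop,
      finrank_sup_of_disjoint (disjoint_ker_aeval_of_isCoprime g hcop)]
    gcongr
    exact ih (hS.mono (Set.subset_insert _ _))

section PrimeFactors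

variable [DecidableEq F] {Q : F[X]}

lemma irreducible_of_mem_primeFactors {φ : F[X]} (hφ : φ ∈ primeFactors Q) : Irreducible φ :=
  irreducible_of_normalized_factor φ (mem_primeFactors.1 hφ)

lemma natDegree_pos_of_mem_primeFactors {φ : F[X]} (hφ : φ ∈ primeFactors Q) :
    (0 : ℝ) < φ.natDegree :=
  Nat.cast_pos.2 (irreducible_of_mem_primeFactors hφ).natDegree_pos

lemma pairwise_primeFactors_isCoprime (Q : F[X]) :
    (primeFactors Q : Set F[X]).Pairwise IsCoprime :=
  pairwise_primeFactors_isRelPrime.imp fun _ _ h => h.isCoprime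

lemma iSup_ker_aeval_primeFactors {g : End F V} (hQ : Squarefree Q) (hg : aeval g Q = 0) :
    ⨆ φ ∈ primeFactors Q, ker (aeval g φ) = ⊤ := by
  obtain ⟨r, hr⟩ := hQ.isRadical.dvd_radical hQ.ne_zero
  rw [iSup_ker_aeval_eq_ker_aeval_prod g (pairwise_primeFactors_isCoprime Q), ker_eq_top]
  change aeval g (radical Q) = 0
  rw [hr, map_mul, hg, zero_mul]

end PrimeFactors

end PrimaryDecomposition

section CentralizerDim

variable {F V : Type*} [Field F] [AddCommGroup V] [Module F V] {g : End F V}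

lemma sq_div_add_le {𝕜 : Type*} [Field 𝕜] [LinearOrder 𝕜] [IsStrictOrderedRing 𝕜] {c d k j : 𝕜}
    (hc : 0 ≤ c) (hd : 0 < d) (h : j * d + c ≤ k) :
    c ^ 2 / d + j * (2 * k - j * d) ≤ k ^ 2 / d := by
  have hsq : c ^ 2 ≤ (k - j * d) ^ 2 := by gcongr; linarith
  rw [div_add' _ _ _ hd.ne']
  gcongr
  linear_combination hsq

lemma coe_aeval_restrict_apply {U : Submodule F V} (hU : U ∈ g.invtSubmodule) (φ : F[X]) (x : U) :
    (aeval (g.restrict hU) φ x : V) = aeval g φ x :=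
  map_aeval_of_semiconj (T := U.subtype) (fun _ => rfl) φ x

lemma finrank_ker_aeval_restrict {U : Submodule F V} (hU : U ∈ g.invtSubmodule) (φ : F[X]) :
    finrank F (ker (aeval (g.restrict hU) φ)) = finrank F ↥(U ⊓ ker (aeval g φ)) := by
  have hker : ker (aeval (g.restrict hU) φ) = (ker (aeval g φ)).comap U.subtype := by
    ext x
    simp [← coe_aeval_restrict_apply hU]
  rw [hker, ← Submodule.finrank_map_subtype_eq, Submodule.map_comap_subtype]

variable [DecidableEq F] {Q : F[X]}

/-- The dimension of the centralizer of `g` in `End F V`, when `Q` is squarefree and annihilates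
`g`: the centralizer preserves each `ker φ(g)` with `φ` a prime factor of `Q`, a vector space of
dimension `(dim ker φ(g)) / deg φ` over the field `F[X] ⧸ (φ)`. -/
noncomputable def centralizerDim (g : End F V) (Q : F[X]) : ℝ :=
  ∑ φ ∈ primeFactors Q, (finrank F (ker (aeval g φ)) : ℝ) ^ 2 / φ.natDegree

lemma centralizerDim_nonneg (g : End F V) (Q : F[X]) : 0 ≤ centralizerDim g Q :=
  Finset.sum_nonneg fun _ _ => by positivity

lemma centralizerDim_restrict_le [FiniteDimensional F V] {U : Submodule F V}
    (hU : U ∈ g.invtSubmodule) : centralizerDim (g.restrict hU) Q ≤ centralizerDim g Q := by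
  unfold centralizerDim
  gcongr with φ
  rw [finrank_ker_aeval_restrict]
  exact Submodule.finrank_mono inf_le_right

lemma centralizerDim_le_mul_finrank [FiniteDimensional F V] {d : ℕ}
    (hd : ∀ φ ∈ primeFactors Q, finrank F (ker (aeval g φ)) ≤ φ.natDegree * d) :
    centralizerDim g Q ≤ d * finrank F V := by
  have hterm : ∀ φ ∈ primeFactors Q,
      (finrank F (ker (aeval g φ)) : ℝ) ^ 2 / φ.natDegree ≤ d * finrank F (ker (aeval g φ)) := by
    intro φ hφ
    rw [div_le_iff₀ (natDegree_pos_of_mem_primeFactors hφ), sq, mul_right_comm, mul_comm (d : ℝ)]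
    gcongr
    exact_mod_cast hd φ hφ
  have hsum : ∑ φ ∈ primeFactors Q, finrank F (ker (aeval g φ)) ≤ finrank F V :=
    (sum_finrank_ker_aeval_le g (pairwise_primeFactors_isCoprime Q)).trans (Submodule.finrank_le _)
  calc centralizerDim g Q ≤ ∑ φ ∈ primeFactors Q, (d : ℝ) * finrank F (ker (aeval g φ)) :=
        Finset.sum_le_sum hterm
    _ = d * (∑ φ ∈ primeFactors Q, finrank F (ker (aeval g φ)) : ℕ) := by
        rw [Nat.cast_sum, Finset.mul_sum]
    _ ≤ d * finrank F V := by gcongr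

lemma centralizerDim_restrict_add_le [FiniteDimensional F V] {φ ψ : F[X]}
    (hφ : φ ∈ primeFactors Q) (hψ : ψ ∈ primeFactors Q)
    (hmax : finrank F (ker (aeval g ψ)) ≤ finrank F (ker (aeval g φ)))
    {L L' U : Submodule F V} (hLφ : L ≤ ker (aeval g φ)) (hL'ψ : L' ≤ ker (aeval g ψ))
    (hL : finrank F L = φ.natDegree) (hL' : finrank F L' = φ.natDegree)
    (hψφ : ψ.natDegree = φ.natDegree) (hLL' : Disjoint L L') (hLU : Disjoint (L ⊔ L') U)
    (hU : U ∈ g.invtSubmodule) :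
    centralizerDim (g.restrict hU) Q + 4 * (finrank F (ker (aeval g ψ)) - φ.natDegree : ℝ) ≤
      centralizerDim g Q := by
  let k : F[X] → ℕ := fun θ => finrank F (ker (aeval g θ))
  let c : F[X] → ℕ := fun θ => finrank F ↥(U ⊓ ker (aeval g θ))
  have hd := natDegree_pos_of_mem_primeFactors hφ
  have hres : centralizerDim (g.restrict hU) Q =
      ∑ θ ∈ primeFactors Q, (c θ : ℝ) ^ 2 / θ.natDegree := by
    simp only [centralizerDim, finrank_ker_aeval_restrict, c]
  have hnonneg (θ : F[X]) : 0 ≤ (k θ : ℝ) ^ 2 / θ.natDegree - (c θ : ℝ) ^ 2 / θ.natDegree := by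
    have : c θ ≤ k θ := Submodule.finrank_mono inf_le_right
    rw [sub_nonneg]
    gcongr
  rw [hres, ← le_sub_iff_add_le', centralizerDim, ← Finset.sum_sub_distrib]
  refine le_trans ?_ (Finset.sum_le_sum_of_subset_of_nonneg
    (Finset.insert_subset hφ (Finset.singleton_subset_iff.2 hψ)) fun θ _ _ => hnonneg θ)
  rcases eq_or_ne φ ψ with rfl | hne
  · have hdrop : (2 : ℝ) * φ.natDegree + c φ ≤ k φ := by
      have := add_finrank_inf_le_of_disjoint hLU (sup_le hLφ hL'ψ)
      rw [finrank_sup_of_disjoint hLL', hL, hL', ← two_mul] at this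
      exact_mod_cast this
    have hsq := sq_div_add_le (Nat.cast_nonneg _) hd hdrop
    rw [Finset.pair_eq_singleton, Finset.sum_singleton]
    linarith
  · have hdropφ : (1 : ℝ) * φ.natDegree + c φ ≤ k φ := by
      rw [one_mul, ← hL]
      exact_mod_cast add_finrank_inf_le_of_disjoint (hLU.mono_left le_sup_left) hLφ
    have hdropψ : (1 : ℝ) * φ.natDegree + c ψ ≤ k ψ := by
      rw [one_mul, ← hL']
      exact_mod_cast add_finrank_inf_le_of_disjoint (hLU.mono_left le_sup_right) hL'ψ
    have hsqφ := sq_div_add_le (Nat.cast_nonneg _) hd hdropφ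
    have hsqψ := sq_div_add_le (Nat.cast_nonneg _) hd hdropψ
    have hle : (k ψ : ℝ) ≤ k φ := Nat.cast_le.2 hmax
    rw [Finset.sum_pair hne, hψφ]
    linarith

end CentralizerDim

section OrthogonalComplements

variable {F V : Type*} [Field F] [AddCommGroup V] [Module F V] {B : LinearMap.BilinForm F V}

lemma orthogonal_mem_invtSubmodule_of_le_map {T : End F V} (hT : B.IsOrthogonal T)
    {W : Submodule F V} (hW : W ≤ W.map T) : B.orthogonal W ∈ T.invtSubmodule := by
  intro x hx w hw
  obtain ⟨w, hwW, rfl⟩ := hW hw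
  exact (hT w x).trans (hx w hwW)

lemma injective_of_isOrthogonal (hB : B.Nondegenerate) {T : End F V} (hT : B.IsOrthogonal T) :
    Function.Injective T := by
  refine (injective_iff_map_eq_zero T).2 fun x hx => hB.1 x fun y => ?_
  rw [← hT, hx, map_zero, LinearMap.zero_apply]

lemma le_map_of_mem_invtSubmodule [FiniteDimensional F V] {T : End F V}
    (hT : Function.Injective T) {W : Submodule F V} (hW : W ∈ T.invtSubmodule) : W ≤ W.map T :=
  (Submodule.eq_of_le_of_finrank_eq (Submodule.map_le_iff_le_comap.2 hW)
    (Submodule.equivMapOfInjective T hT W).finrank_eq.symm).ge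

lemma orthogonal_mem_invtSubmodule [FiniteDimensional F V] (hB : B.Nondegenerate) {g : End F V}
    (hg : B.IsOrthogonal g) {W : Submodule F V} (hW : W ∈ g.invtSubmodule) :
    B.orthogonal W ∈ g.invtSubmodule :=
  orthogonal_mem_invtSubmodule_of_le_map hg
    (le_map_of_mem_invtSubmodule (injective_of_isOrthogonal hB hg) hW)

lemma disjoint_sup_orthogonal_sup {L L' : Submodule F V} (hL : L ≤ B.orthogonal L)
    (hL'L : Disjoint L' (B.orthogonal L)) (hLL' : Disjoint L (B.orthogonal L')) :
    Disjoint (L ⊔ L') (B.orthogonal (L ⊔ L')) := by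
  rw [Submodule.disjoint_def]
  intro x hx hxorth
  obtain ⟨y, hy, z, hz, rfl⟩ := Submodule.mem_sup.1 hx
  have hz0 : z = 0 := by
    refine Submodule.disjoint_def.1 hL'L z hz ?_
    have := Submodule.sub_mem _ (LinearMap.BilinForm.orthogonal_le le_sup_left hxorth) (hL hy)
    rwa [add_sub_cancel_left] at this
  rw [hz0, add_zero] at hxorth ⊢
  exact Submodule.disjoint_def.1 hLL' y hy
    (LinearMap.BilinForm.orthogonal_le le_sup_right hxorth)

lemma finrank_le_of_disjoint_orthogonal [FiniteDimensional F V] (hB : B.Nondegenerate)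
    {L L' : Submodule F V} (h : Disjoint L (B.orthogonal L')) : finrank F L ≤ finrank F L' := by
  have := Submodule.finrank_add_finrank_le_of_disjoint h
  have := LinearMap.BilinForm.finrank_orthogonal hB L'
  have := L'.finrank_le
  lia

lemma exists_mem_ker_aeval_apply_ne_zero [DecidableEq F] (hB : B.Nondegenerate) {g : End F V}
    {Q : F[X]} (hQ : Squarefree Q) (hg : aeval g Q = 0) {v : V} (hv0 : v ≠ 0) :
    ∃ ψ ∈ primeFactors Q, ∃ w ∈ ker (aeval g ψ), B v w ≠ 0 := by
  by_contra! hvw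
  have htop : ⊤ ≤ ker (B v) := by
    rw [← iSup_ker_aeval_primeFactors hQ hg]
    exact iSup₂_le hvw
  exact hv0 (hB.1 v fun x => htop Submodule.mem_top)

lemma exists_dual_cyclicSubmodule [FiniteDimensional F V] [DecidableEq F] (hB : B.Nondegenerate)
    (hrefl : B.IsRefl) {g : End F V} (hgB : B.IsOrthogonal g) {Q : F[X]} (hQ : Squarefree Q)
    (hg : aeval g Q = 0) {φ : F[X]} (hφ : Irreducible φ) {v : V} (hv : v ∈ ker (aeval g φ))
    (hv0 : v ≠ 0) :
    ∃ ψ ∈ primeFactors Q, ψ.natDegree = φ.natDegree ∧ ∃ w ∈ ker (aeval g ψ),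
      finrank F (cyclicSubmodule g w) = φ.natDegree ∧
      Disjoint (cyclicSubmodule g w) (B.orthogonal (cyclicSubmodule g v)) ∧
      Disjoint (cyclicSubmodule g v) (B.orthogonal (cyclicSubmodule g w)) := by
  obtain ⟨ψ, hψ, w, hw, hvw⟩ := exists_mem_ker_aeval_apply_ne_zero hB hQ hg hv0
  have hψirr := irreducible_of_mem_primeFactors hψ
  have hw0 : w ≠ 0 := fun h => hvw (h ▸ map_zero (B v))
  have horth (u : V) : B.orthogonal (cyclicSubmodule g u) ∈ g.invtSubmodule :=
    orthogonal_mem_invtSubmodule hB hgB (cyclicSubmodule_mem_invtSubmodule g u)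
  have hwv : Disjoint (cyclicSubmodule g w) (B.orthogonal (cyclicSubmodule g v)) :=
    (cyclicSubmodule_le_or_disjoint hψirr hw (horth v)).resolve_left fun hle =>
      hvw (hle (self_mem_cyclicSubmodule g w) v (self_mem_cyclicSubmodule g v))
  have hvw' : Disjoint (cyclicSubmodule g v) (B.orthogonal (cyclicSubmodule g w)) :=
    (cyclicSubmodule_le_or_disjoint hφ hv (horth w)).resolve_left fun hle =>
      hvw (hrefl _ _ (hle (self_mem_cyclicSubmodule g v) w (self_mem_cyclicSubmodule g w)))
  have hdim : finrank F (cyclicSubmodule g w) = φ.natDegree := by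
    rw [← finrank_cyclicSubmodule hφ hv hv0]
    exact (finrank_le_of_disjoint_orthogonal hB hwv).antisymm
      (finrank_le_of_disjoint_orthogonal hB hvw')
  exact ⟨ψ, hψ, (finrank_cyclicSubmodule hψirr hw hw0).symm.trans hdim, w, hw, hdim, hwv, hvw'⟩

end OrthogonalComplements

section PGroups

variable {F V P : Type*} [CommRing F] [AddCommGroup V] [Module F V] [Finite V] [Group P]

lemma invariants_ne_bot_of_isPGroup {p : ℕ} [Fact p.Prime] [CharP F p] [Nontrivial V]
    (hP : IsPGroup p P) (ρ : Representation F P V) : ρ.invariants ≠ ⊥ := by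
  let _ : MulAction P V := MulAction.compHom V ρ
  have hpV : p ∣ Nat.card V := by
    obtain ⟨v, hv⟩ := exists_ne (0 : V)
    have hpv : p • v = 0 := by rw [← Nat.cast_smul_eq_nsmul F, CharP.cast_eq_zero, zero_smul]
    exact addOrderOf_eq_prime hpv hv ▸ addOrderOf_dvd_natCard v
  obtain ⟨v, hv, hv0⟩ := hP.exists_fixed_point_of_prime_dvd_card_of_fixed_point V hpV (a := 0)
    fun a => map_zero (ρ a)
  exact (Submodule.ne_bot_iff _).2 ⟨v, hv, hv0.symm⟩

lemma exists_invariant_mem_of_isPGroup {p : ℕ} [Fact p.Prime] [CharP F p] (hP : IsPGroup p P)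
    (ρ : Representation F P V) {K : Submodule F V} (hK : ∀ a, K ∈ End.invtSubmodule (ρ a))
    (hK0 : K ≠ ⊥) : ∃ v ∈ K, v ≠ 0 ∧ ∀ a, ρ a v = v := by
  have : Nontrivial K := Submodule.nontrivial_iff_ne_bot.2 hK0
  obtain ⟨v, hv, hv0⟩ := (Submodule.ne_bot_iff _).1
    (invariants_ne_bot_of_isPGroup hP (ρ.subrepresentation K hK))
  exact ⟨v, v.2, by simpa using hv0, fun a => congr_arg Subtype.val (hv a)⟩

lemma exists_subgroup_fixing_card_le (ρ : Representation F P V) {M : Submodule F V} {w : V}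
    (hw : ∀ a, ρ a w - w ∈ M) :
    ∃ H : Subgroup P, (∀ a ∈ H, ρ a w = w) ∧ Nat.card P ≤ Nat.card M * Nat.card H := by
  let _ : MulAction P V := MulAction.compHom V ρ
  refine ⟨MulAction.stabilizer P w, fun a ha => ha, ?_⟩
  rw [Nat.card_congr (MulAction.orbitProdStabilizerEquivGroup P w).symm, Nat.card_prod]
  gcongr
  have hmem (x : MulAction.orbit P w) : (x : V) - w ∈ M := by
    obtain ⟨_, a, rfl⟩ := x
    exact hw a
  refine Nat.card_le_card_of_injective (fun x => (⟨x - w, hmem x⟩ : M)) fun x y hxy => ?_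
  simpa [Subtype.ext_iff] using hxy

end PGroups

/-- `ρ` identifies `P` with a subgroup of the centralizer of `g` in the isometry group of the
nondegenerate reflexive form `B`, where `g` is itself an isometry. -/
structure IsFaithfulCentralizerRep {F V P : Type*} [Field F] [AddCommGroup V] [Module F V]
    [Group P] (B : LinearMap.BilinForm F V) (g : End F V) (ρ : Representation F P V) : Prop where
  nondegenerate : B.Nondegenerate
  isRefl : B.IsRefl
  isOrthogonal : B.IsOrthogonal g
  isOrthogonal_rep (a : P) : B.IsOrthogonal (ρ a)
  commute (a : P) : Commute (ρ a) g
  injective : Function.Injective ρ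

namespace IsFaithfulCentralizerRep

variable {F V P : Type*} [Field F] [AddCommGroup V] [Module F V] [Group P]
  {B : LinearMap.BilinForm F V} {g : End F V} {ρ : Representation F P V}

lemma finite [Finite F] [FiniteDimensional F V] (h : IsFaithfulCentralizerRep B g ρ) : Finite P :=
  have : Finite (End F V) := Module.finite_of_finite F
  Finite.of_injective ρ h.injective

lemma exists_restrict [FiniteDimensional F V] (h : IsFaithfulCentralizerRep B g ρ)
    {W : Submodule F V} (hW : Disjoint W (B.orthogonal W))
    (hU : B.orthogonal W ∈ g.invtSubmodule) {H : Subgroup P}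
    (hH : ∀ a ∈ H, ∀ x ∈ W, ρ a x = x) :
    ∃ ρ' : Representation F H (B.orthogonal W),
      IsFaithfulCentralizerRep (B.restrict (B.orthogonal W)) (g.restrict hU) ρ' := by
  have hUρ (a : H) : B.orthogonal W ≤ (B.orthogonal W).comap (ρ a) :=
    orthogonal_mem_invtSubmodule_of_le_map (h.isOrthogonal_rep a)
      fun x hx => ⟨x, hx, hH a a.2 x hx⟩
  have hcompl : W ⊔ B.orthogonal W = ⊤ :=
    ((LinearMap.BilinForm.isCompl_orthogonal_iff_disjoint h.isRefl).2 hW).sup_eq_top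
  refine ⟨Representation.subrepresentation (ρ.comp H.subtype) _ hUρ, ?_, ?_, ?_, ?_, ?_, ?_⟩
  · refine LinearMap.BilinForm.nondegenerate_restrict_of_disjoint_orthogonal B h.isRefl ?_
    rw [LinearMap.BilinForm.orthogonal_orthogonal h.nondegenerate h.isRefl]
    exact hW.symm
  · exact fun x y => h.isRefl x y
  · exact fun x y => h.isOrthogonal x y
  · exact fun a x y => h.isOrthogonal_rep a x y
  · exact fun a => LinearMap.ext fun x => Subtype.ext (LinearMap.congr_fun (h.commute a) x)
  · intro a b hab
    refine Subtype.ext (h.injective (LinearMap.ext fun x => ?_))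
    obtain ⟨y, hy, z, hz, rfl⟩ := Submodule.mem_sup.1 (hcompl ▸ Submodule.mem_top (x := x))
    have hz' : ρ a z = ρ b z := congr_arg Subtype.val (LinearMap.congr_fun hab ⟨z, hz⟩)
    rw [map_add, map_add, hH a a.2 y hy, hH b b.2 y hy, hz']

lemma rep_apply_sub_mem (h : IsFaithfulCentralizerRep B g ρ) {L : Submodule F V} {ψ : F[X]} {w : V}
    (hPL : ∀ a, ∀ x ∈ L, ρ a x = x) (hw : w ∈ ker (aeval g ψ)) (a : P) :
    ρ a w - w ∈ B.orthogonal L ⊓ ker (aeval g ψ) := by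
  refine ⟨fun x hx => ?_, sub_mem (ker_aeval_mem_invtSubmodule (h.commute a) ψ hw) hw⟩
  have : B x (ρ a w) = B x w := by
    conv_lhs => rw [← hPL a x hx]
    exact h.isOrthogonal_rep a x w
  change B x (ρ a w - w) = 0
  rw [map_sub, this, sub_self]

lemma exists_subgroup_logb_card_le [Finite F] [FiniteDimensional F V]
    (h : IsFaithfulCentralizerRep B g ρ) {L L' : Submodule F V} {ψ : F[X]} {w : V}
    (hPL : ∀ a, ∀ x ∈ L, ρ a x = x) (hw : w ∈ ker (aeval g ψ)) (hL' : L' ≤ ker (aeval g ψ))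
    (hL'L : Disjoint L' (B.orthogonal L)) :
    ∃ H : Subgroup P, (∀ a ∈ H, ρ a w = w) ∧
      Real.logb (Nat.card F) (Nat.card P) ≤
        (finrank F (ker (aeval g ψ)) - finrank F L' : ℝ) +
          Real.logb (Nat.card F) (Nat.card H) := by
  have := h.finite
  have : Finite V := Module.finite_of_finite F
  have hq : 1 < (Nat.card F : ℝ) := Nat.one_lt_cast.2 Finite.one_lt_card
  obtain ⟨H, hH, hcard⟩ := exists_subgroup_fixing_card_le ρ (h.rep_apply_sub_mem hPL hw)
  refine ⟨H, hH, ?_⟩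
  rw [Module.natCard_eq_pow_finrank (K := F) (V := ↥(B.orthogonal L ⊓ ker (aeval g ψ)))] at hcard
  have hdim : (finrank F L' : ℝ) + finrank F ↥(B.orthogonal L ⊓ ker (aeval g ψ)) ≤
      finrank F (ker (aeval g ψ)) := by
    exact_mod_cast add_finrank_inf_le_of_disjoint hL'L hL'
  calc Real.logb (Nat.card F) (Nat.card P)
      ≤ Real.logb (Nat.card F) ((Nat.card F : ℝ) ^
          finrank F ↥(B.orthogonal L ⊓ ker (aeval g ψ)) * Nat.card H) := by
        refine Real.logb_le_logb_of_le hq (Nat.cast_pos.2 Nat.card_pos) ?_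
        exact_mod_cast hcard
    _ = finrank F ↥(B.orthogonal L ⊓ ker (aeval g ψ)) + Real.logb (Nat.card F) (Nat.card H) := by
        rw [Real.logb_mul (by positivity) (Nat.cast_ne_zero.2 Nat.card_pos.ne'), Real.logb_pow,
          Real.logb_self_eq_one hq, mul_one]
    _ ≤ _ := by linarith

end IsFaithfulCentralizerRep

section Reduction

variable {F V P : Type*} [Field F] [DecidableEq F] [AddCommGroup V] [Module F V]
  [FiniteDimensional F V] [Group P] {B : LinearMap.BilinForm F V} {g : End F V}
  {ρ : Representation F P V} {Q : F[X]}

/-- `W` is a nondegenerate `g`-invariant subspace, fixed pointwise by `H`, and the passage from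
`(V, P)` to `(Wᗮ, H)` lowers `centralizerDim` by at least `4 log_q |P : H|`. -/
structure IsReduction (B : LinearMap.BilinForm F V) (g : End F V) (ρ : Representation F P V)
    (Q : F[X]) (W : Submodule F V) (H : Subgroup P) : Prop where
  ne_bot : W ≠ ⊥
  mem_invtSubmodule : W ∈ g.invtSubmodule
  disjoint_orthogonal : Disjoint W (B.orthogonal W)
  apply_eq_self : ∀ a ∈ H, ∀ x ∈ W, ρ a x = x
  card_bound (hU : B.orthogonal W ∈ g.invtSubmodule) :
    4 * Real.logb (Nat.card F) (Nat.card P) + centralizerDim (g.restrict hU) Q ≤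
      4 * Real.logb (Nat.card F) (Nat.card H) + centralizerDim g Q

namespace IsFaithfulCentralizerRep

lemma isReduction_of_disjoint (h : IsFaithfulCentralizerRep B g ρ) {v : V} (hv0 : v ≠ 0)
    (hPv : ∀ a, ρ a v = v)
    (hL : Disjoint (cyclicSubmodule g v) (B.orthogonal (cyclicSubmodule g v))) :
    IsReduction B g ρ Q (cyclicSubmodule g v) ⊤ where
  ne_bot := (Submodule.ne_bot_iff _).2 ⟨v, self_mem_cyclicSubmodule g v, hv0⟩
  mem_invtSubmodule := cyclicSubmodule_mem_invtSubmodule g v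
  disjoint_orthogonal := hL
  apply_eq_self a _ _ := eq_self_of_mem_cyclicSubmodule (h.commute a) (hPv a)
  card_bound hU := by
    rw [Subgroup.card_top]
    gcongr
    exact centralizerDim_restrict_le hU

lemma exists_isReduction_of_le_orthogonal [Finite F] (h : IsFaithfulCentralizerRep B g ρ)
    (hQ : Squarefree Q) (hg : aeval g Q = 0) {φ : F[X]} (hφ : φ ∈ primeFactors Q)
    (hmax : ∀ ψ ∈ primeFactors Q, finrank F (ker (aeval g ψ)) ≤ finrank F (ker (aeval g φ)))
    {v : V} (hv : v ∈ ker (aeval g φ)) (hv0 : v ≠ 0) (hPv : ∀ a, ρ a v = v)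
    (hL : cyclicSubmodule g v ≤ B.orthogonal (cyclicSubmodule g v)) :
    ∃ W H, IsReduction B g ρ Q W H := by
  obtain ⟨ψ, hψ, hψφ, w, hw, hL'φ, hL'L, hLL'⟩ := exists_dual_cyclicSubmodule h.nondegenerate
    h.isRefl h.isOrthogonal hQ hg (irreducible_of_mem_primeFactors hφ) hv hv0
  set L := cyclicSubmodule g v
  set L' := cyclicSubmodule g w
  have hLφ : finrank F L = φ.natDegree :=
    finrank_cyclicSubmodule (irreducible_of_mem_primeFactors hφ) hv hv0
  have hL_le : L ≤ ker (aeval g φ) :=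
    cyclicSubmodule_le (ker_aeval_mem_invtSubmodule (Commute.refl g) φ) hv
  have hL'_le : L' ≤ ker (aeval g ψ) :=
    cyclicSubmodule_le (ker_aeval_mem_invtSubmodule (Commute.refl g) ψ) hw
  have hPL (a : P) : L ≤ eqLocus (ρ a) LinearMap.id := fun x =>
    eq_self_of_mem_cyclicSubmodule (h.commute a) (hPv a)
  obtain ⟨H, hH, hcard⟩ := h.exists_subgroup_logb_card_le hPL hw hL'_le hL'L
  have hPL' (a : P) (ha : a ∈ H) : L' ≤ eqLocus (ρ a) LinearMap.id := fun x =>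
    eq_self_of_mem_cyclicSubmodule (h.commute a) (hH a ha)
  have hW := disjoint_sup_orthogonal_sup hL hL'L hLL'
  refine ⟨L ⊔ L', H, ?_, ?_, hW, fun a ha => sup_le (hPL a) (hPL' a ha), fun hU => ?_⟩
  · exact (Submodule.ne_bot_iff _).2
      ⟨v, Submodule.mem_sup_left (self_mem_cyclicSubmodule g v), hv0⟩
  · exact g.invtSubmodule.sup_mem (cyclicSubmodule_mem_invtSubmodule g v)
      (cyclicSubmodule_mem_invtSubmodule g w)
  · have := centralizerDim_restrict_add_le hφ hψ (hmax ψ hψ) hL_le hL'_le hLφ hL'φ hψφ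
      (hL'L.symm.mono_left hL) hW hU
    rw [hL'φ] at hcard
    linarith

lemma exists_isReduction [Finite F] [Nontrivial V] (h : IsFaithfulCentralizerRep B g ρ) {p : ℕ}
    [Fact p.Prime] [CharP F p] (hP : IsPGroup p P) (hQ : Squarefree Q) (hg : aeval g Q = 0) :
    ∃ W H, IsReduction B g ρ Q W H := by
  have : Finite V := Module.finite_of_finite F
  obtain ⟨θ, hθ, hθ0⟩ : ∃ θ ∈ primeFactors Q, ker (aeval g θ) ≠ ⊥ := by
    by_contra! hbot
    exact bot_ne_top ((iSup₂_eq_bot.2 hbot).symm.trans (iSup_ker_aeval_primeFactors hQ hg))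
  obtain ⟨φ, hφ, hmax⟩ := Finset.exists_max_image (primeFactors Q)
    (fun φ => finrank F (ker (aeval g φ))) ⟨θ, hθ⟩
  have hφ0 : ker (aeval g φ) ≠ ⊥ := by
    rw [← Submodule.one_le_finrank_iff] at hθ0 ⊢
    exact hθ0.trans (hmax θ hθ)
  obtain ⟨v, hv, hv0, hPv⟩ := exists_invariant_mem_of_isPGroup hP ρ
    (fun a => ker_aeval_mem_invtSubmodule (h.commute a) φ) hφ0
  rcases cyclicSubmodule_le_or_disjoint (irreducible_of_mem_primeFactors hφ) hv
    (orthogonal_mem_invtSubmodule h.nondegenerate h.isOrthogonal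
      (cyclicSubmodule_mem_invtSubmodule g v)) with hL | hL
  · exact h.exists_isReduction_of_le_orthogonal hQ hg hφ hmax hv hv0 hPv hL
  · exact ⟨_, _, h.isReduction_of_disjoint hv0 hPv hL⟩

theorem four_mul_logb_card_le_centralizerDim [Finite F] (h : IsFaithfulCentralizerRep B g ρ)
    {p : ℕ} [Fact p.Prime] [CharP F p] (hP : IsPGroup p P) (hQ : Squarefree Q)
    (hg : aeval g Q = 0) :
    4 * Real.logb (Nat.card F) (Nat.card P) ≤ centralizerDim g Q := by
  induction hn : finrank F V using Nat.strong_induction_on generalizing V P with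
  | _ n ih =>
    rcases subsingleton_or_nontrivial V with hV | hV
    · have : Subsingleton P := ⟨fun a b => h.injective (LinearMap.ext fun _ => hV.elim _ _)⟩
      simpa using centralizerDim_nonneg g Q
    obtain ⟨W, H, hWH⟩ := h.exists_isReduction hP hQ hg
    have hU := orthogonal_mem_invtSubmodule h.nondegenerate h.isOrthogonal hWH.mem_invtSubmodule
    obtain ⟨ρ', h'⟩ := h.exists_restrict hWH.disjoint_orthogonal hU hWH.apply_eq_self
    have hgU : aeval (g.restrict hU : End F (B.orthogonal W)) Q = 0 := LinearMap.ext fun x =>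
      Subtype.ext ((coe_aeval_restrict_apply hU Q x).trans (LinearMap.congr_fun hg x))
    have hlt : finrank F (B.orthogonal W) < n := by
      have := LinearMap.BilinForm.finrank_orthogonal h.nondegenerate W
      have := Submodule.one_le_finrank_iff.2 hWH.ne_bot
      have := W.finrank_le
      lia
    linarith [hWH.card_bound hU, ih _ hlt h' (hP.to_subgroup H) hgU rfl]

end IsFaithfulCentralizerRep

end Reduction

section MatrixEigenspaces

variable {F K V ι : Type*} [Field F] [Field K] [AddCommGroup V] [Module K V] [Fintype ι]

lemma finrank_ker_mul_le [FiniteDimensional K V] (S T : End K V) :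
    finrank K (ker (S * T)) ≤ finrank K (ker S) + finrank K (ker T) := by
  let T' := T.domRestrict (ker (S * T))
  have hrange : range T' ≤ ker S := by
    rintro _ ⟨x, rfl⟩
    exact x.2
  have hker : (ker T').map (Submodule.subtype _) ≤ ker T := by
    rintro _ ⟨x, hx, rfl⟩
    exact hx
  rw [← finrank_range_add_finrank_ker T', ← Submodule.finrank_map_subtype_eq _ (ker T')]
  exact add_le_add (Submodule.finrank_mono hrange) (Submodule.finrank_mono hker)

lemma finrank_ker_aeval_le_of_splits [FiniteDimensional K V] {T : End K V} {d : ℕ}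
    (hd : ∀ a : K, finrank K (ker (T - a • LinearMap.id)) ≤ d) {φ : K[X]} (hφ : φ.Splits)
    (hφ0 : φ ≠ 0) : finrank K (ker (aeval T φ)) ≤ φ.natDegree * d := by
  induction hφ using Submonoid.closure_induction with
  | mem φ hφ =>
    obtain ⟨a, rfl⟩ | ⟨a, rfl⟩ := hφ
    · have hker : ker (aeval T (C a)) = ⊥ := by
        rw [aeval_C, Algebra.algebraMap_eq_smul_one, ker_smul _ _ (C_ne_zero.1 hφ0)]
        exact ker_id
      rw [hker, finrank_bot]
      exact Nat.zero_le _
    · have heq : aeval T (X + C a) = T - (-a) • LinearMap.id := by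
        ext x
        simp
      rw [heq, natDegree_X_add_C, one_mul]
      exact hd (-a)
  | one => simp [Module.End.one_eq_id]
  | mul φ ψ _ _ hφ hψ =>
    have hφ0' := left_ne_zero_of_mul hφ0
    have hψ0' := right_ne_zero_of_mul hφ0
    rw [map_mul, natDegree_mul hφ0' hψ0', add_mul]
    exact (finrank_ker_mul_le _ _).trans (add_le_add (hφ hφ0') (hψ hψ0'))

lemma finrank_ker_mulVecLin_le_map [Algebra F K] (A : Matrix ι ι F) :
    finrank F (ker A.mulVecLin) ≤ finrank K (ker (A.map (algebraMap F K)).mulVecLin) := by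
  let b := Module.finBasis F (ker A.mulVecLin)
  have hb : LinearIndependent F fun i => (b i : ι → F) :=
    b.linearIndependent.map' (Submodule.subtype _) (Submodule.ker_subtype _)
  have hmem (i) : algebraMap F K ∘ (b i : ι → F) ∈ ker (A.map (algebraMap F K)).mulVecLin := by
    have hbi : A.mulVec (b i : ι → F) = 0 := (b i).2
    ext j
    simp [← RingHom.map_mulVec, hbi]
  have hbK : LinearIndependent K fun i =>
      (⟨_, hmem i⟩ : ker (A.map (algebraMap F K)).mulVecLin) :=
    .of_comp (Submodule.subtype _) (linearIndependent_algebraMap_comp_iff.2 hb)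
  simpa using hbK.fintype_card_le_finrank

lemma aeval_mulVecLin [DecidableEq ι] (A : Matrix ι ι F) (φ : F[X]) :
    aeval (A.mulVecLin : End F (ι → F)) φ = (aeval A φ).mulVecLin :=
  aeval_algHom_apply (Matrix.toLinAlgEquiv' (R := F) (n := ι)).toAlgHom A φ

lemma map_aeval_matrix [DecidableEq ι] [Algebra F K] (A : Matrix ι ι F) (φ : F[X]) :
    (aeval A φ).map (algebraMap F K) =
      aeval (A.map (algebraMap F K)) (φ.map (algebraMap F K)) := by
  rw [aeval_map_algebraMap]
  exact (aeval_algHom_apply (Algebra.ofId F K).mapMatrix A φ).symm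

lemma finrank_ker_aeval_mulVecLin_le [Algebra F K] [IsAlgClosed K] {A : Matrix ι ι F}
    {d : ℕ}
    (hd : ∀ a : K, finrank K (ker ((A.map (algebraMap F K)).mulVecLin - a • LinearMap.id)) ≤ d)
    {φ : F[X]} (hφ : φ ≠ 0) :
    finrank F (ker (aeval (A.mulVecLin : End F (ι → F)) φ)) ≤ φ.natDegree * d := by
  classical
  rw [aeval_mulVecLin, ← natDegree_map (algebraMap F K)]
  refine (finrank_ker_mulVecLin_le_map (K := K) _).trans ?_
  rw [map_aeval_matrix, ← aeval_mulVecLin]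
  exact finrank_ker_aeval_le_of_splits hd (IsAlgClosed.splits _) (Polynomial.map_ne_zero hφ)

lemma finrank_eigenspace_le_card_sub_matSupp [DecidableEq ι] {A : Matrix ι ι F} (hA : IsUnit A)
    (a : AlgebraicClosure F) :
    finrank (AlgebraicClosure F) (ker ((A.map (algebraMap F (AlgebraicClosure F))).mulVecLin -
      a • LinearMap.id)) ≤ Fintype.card ι - matSupp A := by
  let D (x : (AlgebraicClosure F)ˣ) : ℕ := finrank (AlgebraicClosure F)
    (ker ((A.map (algebraMap F (AlgebraicClosure F))).mulVecLin -
      (x : AlgebraicClosure F) • LinearMap.id))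
  have hD (x) : D x ≤ Fintype.card ι := by
    simpa using Submodule.finrank_le (R := AlgebraicClosure F) (M := ι → AlgebraicClosure F) _
  have hdim : Fintype.card ι - matSupp A = ⨆ x, D x := Nat.sub_sub_self (ciSup_le hD)
  rw [hdim]
  rcases eq_or_ne a 0 with rfl | ha
  · have hinj : ker (A.map (algebraMap F (AlgebraicClosure F))).mulVecLin = ⊥ := by
      rw [ker_eq_bot]
      exact Matrix.mulVec_injective_iff_isUnit.2
        (hA.map (algebraMap F (AlgebraicClosure F)).mapMatrix)
    rw [zero_smul, sub_zero, hinj, finrank_bot]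
    exact Nat.zero_le _
  · exact le_ciSup (f := D) ⟨_, Set.forall_mem_range.2 hD⟩ (Units.mk0 a ha)

lemma centralizerDim_mulVecLin_le [DecidableEq F] [DecidableEq ι] {A : Matrix ι ι F}
    (hA : IsUnit A) (Q : F[X]) :
    centralizerDim (A.mulVecLin : End F (ι → F)) Q ≤
      (Fintype.card ι - matSupp A) * Fintype.card ι := by
  have := centralizerDim_le_mul_finrank (Q := Q) fun φ hφ => finrank_ker_aeval_mulVecLin_le
    (finrank_eigenspace_le_card_sub_matSupp hA) (irreducible_of_mem_primeFactors hφ).ne_zero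
  have hs : matSupp A ≤ Fintype.card ι := Nat.sub_le _ _
  rwa [finrank_fintype_fun_eq_card, Nat.cast_sub hs] at this

end MatrixEigenspaces

lemma squarefree_X_pow_sub_one {F : Type*} [Field F] {p : ℕ} [hp : Fact p.Prime] [CharP F p]
    {n : ℕ} (hn : n.Coprime p) : Squarefree (X ^ n - 1 : F[X]) :=
  (X_pow_sub_one_separable_iff.2 fun h0 => hp.out.coprime_iff_not_dvd.1 hn.symm
    ((CharP.cast_eq_zero_iff F p n).1 h0)).squarefree

section Symplectic

variable {F l P : Type*} [Field F] [Fintype l] [DecidableEq l] [Group P]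

/-- The natural representation of `Sp_{2m}(F)`, with `m` the cardinality of `l`. -/
def symplecticRep (l F : Type*) [Field F] [Fintype l] [DecidableEq l] :
    Representation F (Matrix.symplecticGroup l F) (l ⊕ l → F) :=
  (Matrix.toLinAlgEquiv' : Matrix (l ⊕ l) (l ⊕ l) F ≃ₐ[F] _).toMulEquiv.toMonoidHom.comp
    (Matrix.symplecticGroup l F).subtype

lemma symplecticRep_injective : Function.Injective (symplecticRep l F) :=
  Matrix.toLinAlgEquiv'.injective.comp Subtype.val_injective

lemma isRefl_toBilin'_J : (Matrix.toBilin' (Matrix.J l F)).IsRefl := by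
  intro x y hxy
  rw [Matrix.toBilin'_apply'] at hxy ⊢
  rw [Matrix.dotProduct_mulVec, ← Matrix.mulVec_transpose, Matrix.J_transpose, Matrix.neg_mulVec,
    neg_dotProduct, dotProduct_comm, hxy, neg_zero]

lemma isOrthogonal_symplecticRep (g : Matrix.symplecticGroup l F) :
    (Matrix.toBilin' (Matrix.J l F)).IsOrthogonal (symplecticRep l F g) := by
  intro x y
  have := Matrix.toBilin'_comp (Matrix.J l F) g.1 g.1
  rw [SymplecticGroup.mem_iff'.1 g.2] at this
  exact congr($this x y)

lemma isFaithfulCentralizerRep_symplecticRep {g : Matrix.symplecticGroup l F}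
    {i : P →* Matrix.symplecticGroup l F} (hi : Function.Injective i)
    (hg : ∀ a, Commute (i a) g) :
    IsFaithfulCentralizerRep (Matrix.toBilin' (Matrix.J l F)) (symplecticRep l F g)
      ((symplecticRep l F).comp i) where
  nondegenerate := LinearMap.BilinForm.nondegenerate_toBilin'_of_det_ne_zero' _
    (Matrix.isUnit_det_J l F).ne_zero
  isRefl := isRefl_toBilin'_J
  isOrthogonal := isOrthogonal_symplecticRep g
  isOrthogonal_rep a := isOrthogonal_symplecticRep (i a)
  commute a := (hg a).map (symplecticRep l F)
  injective := symplecticRep_injective.comp hi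

lemma centralizerDim_symplecticRep_le [DecidableEq F] (g : Matrix.symplecticGroup l F) (Q : F[X]) :
    centralizerDim (symplecticRep l F g) Q ≤
      (2 * Fintype.card l - matSupp g.1) * (2 * Fintype.card l) := by
  have := centralizerDim_mulVecLin_le
    ((Matrix.isUnit_iff_isUnit_det _).2 (SymplecticGroup.symplectic_det g.2)) Q
  rwa [Fintype.card_sum, Nat.cast_add, ← two_mul] at this

end Symplectic

theorem centralizer_p_part_bound_large_support_general {F l : Type*} [Field F] [Fintype F]
    [Fintype l] [DecidableEq l] {p : ℕ} [Fact p.Prime] [CharP F p]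
    (g : Matrix.symplecticGroup l F) (hg : (orderOf g).Coprime p) :
    (p : ℝ) ^ (Nat.card (Subgroup.centralizer {g})).factorization p ≤
      (Fintype.card F : ℝ) ^
        (((2 * Fintype.card l : ℝ) ^ 2 - 2 * Fintype.card l * matSupp g.1) / 4) := by
  classical
  let P : Sylow p (Subgroup.centralizer {g}) := default
  let i : P →* Matrix.symplecticGroup l F := (Subgroup.subtype _).comp P.1.subtype
  have hρ : IsFaithfulCentralizerRep (Matrix.toBilin' (Matrix.J l F)) (symplecticRep l F g)
      ((symplecticRep l F).comp i) :=
    isFaithfulCentralizerRep_symplecticRep (Subtype.val_injective.comp Subtype.val_injective)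
      fun a => Subgroup.mem_centralizer_singleton_iff.1 a.1.2
  have hgQ : aeval (symplecticRep l F g) (X ^ orderOf g - 1 : F[X]) = 0 := by
    rw [map_sub, aeval_X_pow, map_one, ← map_pow, pow_orderOf_eq_one, map_one, sub_self]
  have hcard := (hρ.four_mul_logb_card_le_centralizerDim P.isPGroup'
    (squarefree_X_pow_sub_one hg) hgQ).trans (centralizerDim_symplecticRep_le g _)
  have hp := (Fact.out : p.Prime).pos
  rw [← Real.logb_le_iff_le_rpow (Nat.one_lt_cast.2 Fintype.one_lt_card) (by positivity)]
  rw [Sylow.card_eq_multiplicity, Nat.card_eq_fintype_card (α := F), Nat.cast_pow] at hcard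
  linarith

/-- **Lemma 3.1(ii) of Liebeck–Shalev–Tiep (symplectic case).** Let `q = p^f`, `n = 2m`
even, `G = Sp_n(q)`, and `g ∈ G` semisimple (of order prime to `p`) with support
`s = supp(g)` satisfying `n/2 ≤ s < n`. Then `|C_G(g)|_p ≤ q^{(n² − ns)/4}`. -/
theorem centralizer_p_part_bound_large_support (F : Type) [Field F] [Fintype F]
    (p f : ℕ) (hp : p.Prime) (hf : 0 < f) (hcard : Fintype.card F = p ^ f)
    (m : ℕ) (g : Matrix.symplecticGroup (Fin m) F)
    (hss : Nat.Coprime (orderOf g) p)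
    (s : ℕ) (hs : s = matSupp (g : Matrix (Fin m ⊕ Fin m) (Fin m ⊕ Fin m) F))
    (h1 : m ≤ s) (h2 : s < 2 * m) :
    ((p : ℝ) ^ ((Nat.card
        (Subgroup.centralizer {g} : Subgroup (Matrix.symplecticGroup (Fin m) F))).factorization p))
      ≤ (Fintype.card F : ℝ) ^ (((2 * m : ℝ) ^ 2 - (2 * m : ℝ) * s) / 4) := by
  have : Fact p.Prime := ⟨hp⟩
  have : CharP F p := charP_of_card_eq_prime_pow hcard
  subst hs
  simpa using centralizer_p_part_bound_large_support_general g hss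

end McKayGraphs
end

section
/- Let q be a prime power, n even, and G = Sp_n(q). For an integer s with 1 ≤ s < n/2, the number of semisimple elements g ∈ G with supp(g) = s is less than 15.2 · q^{s(2n−s+1)/2 + n/2}. -/
/-!
If `supp(g) = s < n / 2`, then some `x` in the algebraic closure satisfies `rank (g - x) = s`, and
the identity `g J gᵀ - x² J = (g - x) J gᵀ + x J (g - x)ᵀ` forces `x² = 1`, because its right side
has rank at most `2 s < n`. So, up to sign, `rank (g - 1) = s`.

Put `N = (g - 1) J`, so that `N J Nᵀ = Nᵀ - N`. Following Wall, the column space of `N` carries a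
nondegenerate form with Gram matrix `X` in a basis `U`: `N = U X⁻¹ Uᵀ` and `X - Xᵀ = Uᵀ J U`.
There are at most `q ^ (n s)` choices of `U`, and `X` is then determined by its `s (s + 1) / 2`
entries on and above the diagonal. Changing the basis by `P ∈ GL_s` replaces `(U, X)` by
`(U P, Pᵀ X P)` without changing `N`, so each `N` is counted `|GL_s(q)| ≥ q ^ (s² - s)` times.
-/

namespace McKayGraphs

open Matrix

section Rank

variable {K : Type*} [Field K] {m n : Type*} [Fintype n]

lemma exists_rank_factorization [Fintype m] {N : Matrix m n K} {s : ℕ} (hs : N.rank = s) :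
    ∃ (U : Matrix m (Fin s) K) (C : Matrix (Fin s) n K)
      (L : Matrix (Fin s) m K) (R : Matrix n (Fin s) K),
      N = U * C ∧ L * U = 1 ∧ C * R = 1 := by
  classical
  let f := N.toLin'
  let e : LinearMap.range f ≃ₗ[K] (Fin s → K) :=
    LinearEquiv.ofFinrankEq _ _ (hs.trans (Module.finrank_fin_fun K).symm)
  let u := (LinearMap.range f).subtype ∘ₗ e.symm.toLinearMap
  let c := e.toLinearMap ∘ₗ f.rangeRestrict
  have huc : u ∘ₗ c = f := by ext; simp [u, c]
  obtain ⟨l, hl⟩ := u.exists_leftInverse_of_injective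
    (LinearMap.ker_eq_bot.2 (Subtype.val_injective.comp e.symm.injective))
  obtain ⟨r, hr⟩ := c.exists_rightInverse_of_surjective
    (LinearMap.range_eq_top.2 (e.surjective.comp f.surjective_rangeRestrict))
  refine ⟨u.toMatrix', c.toMatrix', l.toMatrix', r.toMatrix', ?_, ?_, ?_⟩
  · rw [← LinearMap.toMatrix'_comp, huc, LinearMap.toMatrix'_toLin']
  · rw [← LinearMap.toMatrix'_comp, hl, LinearMap.toMatrix'_id]
  · rw [← LinearMap.toMatrix'_comp, hr, LinearMap.toMatrix'_id]

lemma rank_map_ringHom [Finite m] {K' : Type*} [Field K'] (φ : K →+* K') (N : Matrix m n K) :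
    (N.map φ).rank = N.rank := by
  cases nonempty_fintype m
  obtain ⟨U, C, L, R, hN, hL, hR⟩ := exists_rank_factorization (rfl : N.rank = _)
  have hN' : N.map φ = U.map φ * C.map φ := by rw [← Matrix.map_mul, ← hN]
  have hL' : L.map φ * U.map φ = 1 := by simp [← Matrix.map_mul, hL]
  have hR' : C.map φ * R.map φ = 1 := by simp [← Matrix.map_mul, hR]
  apply le_antisymm
  · calc (N.map φ).rank ≤ (U.map φ).rank := hN' ▸ rank_mul_le_left _ _
      _ ≤ N.rank := by simpa using rank_le_card_width (U.map φ)
  · calc N.rank = (L.map φ * N.map φ * R.map φ).rank := by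
          rw [hN', ← Matrix.mul_assoc, hL', Matrix.one_mul, hR', rank_one, Fintype.card_fin]
      _ ≤ (L.map φ * N.map φ).rank := rank_mul_le_left _ _
      _ ≤ (N.map φ).rank := rank_mul_le_right _ _

lemma rank_add_le [Finite m] (A B : Matrix m n K) : (A + B).rank ≤ A.rank + B.rank := by
  have hrange : LinearMap.range (A + B).mulVecLin ≤
      LinearMap.range A.mulVecLin ⊔ LinearMap.range B.mulVecLin := by
    rw [mulVecLin_add]
    exact LinearMap.range_add_le _ _
  exact (Submodule.finrank_mono hrange).trans (Submodule.finrank_add_le_finrank_add_finrank _ _)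

lemma rank_add_finrank_ker_mulVecLin [Finite m] (N : Matrix m n K) :
    N.rank + Module.finrank K (LinearMap.ker N.mulVecLin) = Fintype.card n := by
  rw [← Module.finrank_fintype_fun_eq_card K]
  exact LinearMap.finrank_range_add_finrank_ker N.mulVecLin

end Rank

section WallPairs

variable {R : Type*} [CommRing R] {n : Type*} {s : ℕ}

lemma mul_conj_inv_mul_transpose (U : Matrix n (Fin s) R) (X : Matrix (Fin s) (Fin s) R)
    (P : GL (Fin s) R) :
    (U * P.1) * (P.1ᵀ * X * P.1)⁻¹ * (U * P.1)ᵀ = U * X⁻¹ * Uᵀ := by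
  have hP : P.1 * P.1⁻¹ = 1 := mul_nonsing_inv _ (isUnits_det_units P)
  calc (U * P.1) * (P.1ᵀ * X * P.1)⁻¹ * (U * P.1)ᵀ
      = U * (P.1 * P.1⁻¹) * X⁻¹ * (P.1 * P.1⁻¹)ᵀ * Uᵀ := by
        simp only [Matrix.mul_inv_rev, transpose_mul, transpose_nonsing_inv, Matrix.mul_assoc]
    _ = U * X⁻¹ * Uᵀ := by simp only [hP, transpose_one, Matrix.mul_one]

variable [Fintype n]

/-- The matrices `N` of rank `s` with `N J Nᵀ = Nᵀ - N`. When `J` is the matrix of a symplectic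
form, these are the matrices `(g - 1) J` for the isometries `g` with `rank (g - 1) = s`. -/
def wallSolutions (J : Matrix n n R) (s : ℕ) : Set (Matrix n n R) :=
  {N | N * J * Nᵀ = Nᵀ - N ∧ N.rank = s}

/-- The pairs `(U, X)` with `X - Xᵀ = Uᵀ J U`. They parametrize `wallSolutions J s` by
`N = U X⁻¹ Uᵀ`: the columns of `U` are a basis of the column space of `N`, and `X` is the Gram
matrix of the Wall form of `N` in that basis. Neither the independence of the columns nor the
invertibility of `X` is imposed, since the pairs are only counted from above. -/
def wallPairs (J : Matrix n n R) (s : ℕ) :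
    Set (Matrix n (Fin s) R × Matrix (Fin s) (Fin s) R) :=
  {p | p.2 - p.2ᵀ = p.1ᵀ * J * p.1}

lemma mul_mem_wallPairs {J : Matrix n n R} {U : Matrix n (Fin s) R}
    {X : Matrix (Fin s) (Fin s) R} (h : (U, X) ∈ wallPairs J s) (P : Matrix (Fin s) (Fin s) R) :
    (U * P, Pᵀ * X * P) ∈ wallPairs J s := by
  have hX : X - Xᵀ = Uᵀ * J * U := h
  calc Pᵀ * X * P - (Pᵀ * X * P)ᵀ = Pᵀ * (X - Xᵀ) * P := by
        simp only [transpose_mul, transpose_transpose, Matrix.mul_sub, Matrix.sub_mul,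
          Matrix.mul_assoc]
    _ = (U * P)ᵀ * J * (U * P) := by rw [hX]; simp only [transpose_mul, Matrix.mul_assoc]

end WallPairs

section WallParametrization

variable {K : Type*} [Field K] {n : Type*} [Fintype n] {s : ℕ}

lemma exists_mul_inv_mul_transpose {N A : Matrix n n K} (hA : Nᵀ = N * A) (hs : N.rank = s) :
    ∃ (U : Matrix n (Fin s) K) (L : Matrix (Fin s) n K) (X : Matrix (Fin s) (Fin s) K),
      L * U = 1 ∧ IsUnit X.det ∧ N = U * X⁻¹ * Uᵀ := by
  obtain ⟨U, C, L, R, hN, hL, hR⟩ := exists_rank_factorization hs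
  have hLt : Uᵀ * Lᵀ = 1 := by rw [← transpose_mul, hL, transpose_one]
  have hNt : N = (C * A)ᵀ * Uᵀ := by
    rw [← transpose_mul, ← Matrix.mul_assoc, ← hN, ← hA, transpose_transpose]
  have hNL : N = U * (C * Lᵀ) * Uᵀ := by
    calc N = (C * A)ᵀ * (Uᵀ * Lᵀ) * Uᵀ := by rw [hLt, Matrix.mul_one, ← hNt]
      _ = N * Lᵀ * Uᵀ := by rw [← Matrix.mul_assoc, ← hNt]
      _ = U * (C * Lᵀ) * Uᵀ := by nth_rw 1 [hN]; simp only [Matrix.mul_assoc]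
  have hC : C = C * Lᵀ * Uᵀ := by
    calc C = L * N := by rw [hN, ← Matrix.mul_assoc, hL, Matrix.one_mul]
      _ = L * U * (C * Lᵀ * Uᵀ) := by nth_rw 1 [hNL]; simp only [Matrix.mul_assoc]
      _ = C * Lᵀ * Uᵀ := by rw [hL, Matrix.one_mul]
  have hX : C * Lᵀ * (Uᵀ * R) = 1 := by rw [← Matrix.mul_assoc, ← hC, hR]
  refine ⟨U, L, Uᵀ * R, hL, isUnit_det_of_left_inverse hX, ?_⟩
  rwa [inv_eq_left_inv hX]

lemma exists_mem_wallPairs {J N : Matrix n n K} (h : N ∈ wallSolutions J s) :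
    ∃ (U : Matrix n (Fin s) K) (L : Matrix (Fin s) n K) (X : Matrix (Fin s) (Fin s) K),
      L * U = 1 ∧ N = U * X⁻¹ * Uᵀ ∧ (U, X) ∈ wallPairs J s := by
  obtain ⟨hN, hs⟩ := h
  classical
  have hNt : Nᵀ = N * (1 + J * Nᵀ) := by
    rw [Matrix.mul_add, Matrix.mul_one, ← Matrix.mul_assoc, hN, add_sub_cancel]
  obtain ⟨U, L, X, hL, hX, hNU⟩ := exists_mul_inv_mul_transpose hNt hs
  refine ⟨U, L, X, hL, hNU, ?_⟩
  have hXL : X * L * U = X := by rw [Matrix.mul_assoc, hL, Matrix.mul_one]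
  have hULX : Uᵀ * (X * L)ᵀ = Xᵀ := by rw [← transpose_mul, hXL]
  have hXN : X * L * N = Uᵀ := by
    rw [hNU, ← Matrix.mul_assoc, ← Matrix.mul_assoc, hXL, mul_nonsing_inv _ hX, Matrix.one_mul]
  have hNX : Nᵀ * (X * L)ᵀ = U := by rw [← transpose_mul, hXN, transpose_transpose]
  calc X - Xᵀ = X * L * (Nᵀ * (X * L)ᵀ) - X * L * N * (X * L)ᵀ := by rw [hNX, hXN, hXL, hULX]
    _ = X * L * (Nᵀ - N) * (X * L)ᵀ := by
      simp only [Matrix.mul_sub, Matrix.sub_mul, Matrix.mul_assoc]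
    _ = X * L * N * J * (Nᵀ * (X * L)ᵀ) := by rw [← hN]; simp only [Matrix.mul_assoc]
    _ = Uᵀ * J * U := by rw [hXN, hNX]

end WallParametrization

section Counting

variable {F : Type*} [Field F] {n : Type*} [Fintype n]

lemma card_wallPairs_le [Fintype F] (J : Matrix n n F) (s : ℕ) :
    Nat.card (wallPairs J s) ≤
      Fintype.card F ^ (Fintype.card n * s) * Fintype.card F ^ (s + 1).choose 2 := by
  classical
  let T := {t : Fin s × Fin s // t.1 ≤ t.2}
  let frameAndUpperPart : wallPairs J s → (n → Fin s → F) × (T → F) :=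
    fun p ↦ (p.1.1, fun t ↦ p.1.2 t.1.1 t.1.2)
  have hinj : Function.Injective frameAndUpperPart := by
    rintro ⟨⟨U, X⟩, hX : X - Xᵀ = Uᵀ * J * U⟩ ⟨⟨U', X'⟩, hX' : X' - X'ᵀ = U'ᵀ * J * U'⟩ h
    obtain ⟨rfl : U = U', hupper⟩ := Prod.mk.inj h
    have hle : ∀ i j, i ≤ j → X i j = X' i j := fun i j hij ↦ congrFun hupper ⟨(i, j), hij⟩
    have hskew : ∀ i j, X i j - X j i = X' i j - X' j i := fun i j ↦
      congrFun₂ (hX.trans hX'.symm) i j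
    have hXX' : X = X' := by
      ext i j
      rcases le_total i j with hij | hji
      · exact hle i j hij
      · simpa [hle j i hji] using hskew i j
    exact Subtype.ext (congrArg (U, ·) hXX')
  have hT : Fintype.card T = (s + 1).choose 2 := by
    rw [← Fintype.card_congr (Sym2.sortEquiv (α := Fin s)), Sym2.card, Fintype.card_fin]
  calc Nat.card (wallPairs J s) ≤ Nat.card ((n → Fin s → F) × (T → F)) :=
        Nat.card_le_card_of_injective _ hinj
    _ = _ := by simp [hT, ← pow_mul, mul_comm]

lemma card_wallSolutions_mul_card_GL_le [Finite F] (J : Matrix n n F) (s : ℕ) :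
    Nat.card (wallSolutions J s) * Nat.card (GL (Fin s) F) ≤ Nat.card (wallPairs J s) := by
  choose U L X hL hN hX using fun N : wallSolutions J s ↦ exists_mem_wallPairs N.2
  let changeBasis (a : wallSolutions J s × GL (Fin s) F) : wallPairs J s :=
    ⟨(U a.1 * a.2.1, a.2.1ᵀ * X a.1 * a.2.1), mul_mem_wallPairs (hX a.1) a.2.1⟩
  have hinj : Function.Injective changeBasis := by
    rintro ⟨N, P⟩ ⟨N', P'⟩ h
    obtain ⟨hUP, hXP⟩ : U N * P.1 = U N' * P'.1 ∧ P.1ᵀ * X N * P.1 = P'.1ᵀ * X N' * P'.1 :=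
      Prod.mk.inj (Subtype.mk.inj h)
    obtain rfl : N = N' := by
      apply Subtype.ext
      rw [hN N, hN N', ← mul_conj_inv_mul_transpose (U N) (X N) P, hUP, hXP,
        mul_conj_inv_mul_transpose]
    have hP : P.1 = P'.1 := by
      simpa only [← Matrix.mul_assoc, hL, Matrix.one_mul] using congrArg (L N * ·) hUP
    rw [Units.ext hP]
  rw [← Nat.card_prod]
  exact Nat.card_le_card_of_injective _ hinj

lemma pow_mul_self_le_mul_card_GL (F : Type*) [Field F] [Fintype F] (s : ℕ) :
    Fintype.card F ^ (s * s) ≤ Fintype.card F ^ s * Nat.card (GL (Fin s) F) := by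
  set q := Fintype.card F
  have hq : 2 ≤ q := Fintype.one_lt_card
  have hfactor (i : Fin s) : q ^ s ≤ q * (q ^ s - q ^ (i : ℕ)) := by
    have hi : q ^ ((i : ℕ) + 1) ≤ q ^ s := Nat.pow_le_pow_right (by lia) i.2
    calc q ^ s ≤ 2 * q ^ s - q ^ ((i : ℕ) + 1) := by lia
      _ ≤ q * q ^ s - q ^ ((i : ℕ) + 1) := by gcongr
      _ = q * (q ^ s - q ^ (i : ℕ)) := by rw [Nat.mul_sub, pow_succ']
  calc q ^ (s * s) = ∏ _i : Fin s, q ^ s := by simp [pow_mul]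
    _ ≤ ∏ i : Fin s, q * (q ^ s - q ^ (i : ℕ)) := Finset.prod_le_prod' fun i _ ↦ hfactor i
    _ = q ^ s * Nat.card (GL (Fin s) F) := by simp [Finset.prod_mul_distrib, card_GL_field, q]

lemma card_wallSolutions_le [Fintype F] (J : Matrix n n F) (s : ℕ) :
    (Nat.card (wallSolutions J s) : ℝ) ≤
      (Fintype.card F : ℝ) ^ ((s : ℝ) * (2 * Fintype.card n - s + 1) / 2 + s) := by
  set c := Nat.card (wallSolutions J s)
  set q := Fintype.card F
  have hnat : c * q ^ (s * s) ≤ q ^ (s + (Fintype.card n * s + (s + 1).choose 2)) :=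
    calc c * q ^ (s * s) ≤ c * (q ^ s * Nat.card (GL (Fin s) F)) := by
          gcongr; exact pow_mul_self_le_mul_card_GL F s
      _ = q ^ s * (c * Nat.card (GL (Fin s) F)) := by ring
      _ ≤ q ^ s * (q ^ (Fintype.card n * s) * q ^ (s + 1).choose 2) := by
          exact Nat.mul_le_mul_left _
            ((card_wallSolutions_mul_card_GL_le J s).trans (card_wallPairs_le J s))
      _ = _ := by rw [pow_add, pow_add]
  have hq : (0 : ℝ) < q := by exact_mod_cast Fintype.card_pos
  have hreal : (c : ℝ) * (q : ℝ) ^ (s * s) ≤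
      (q : ℝ) ^ (s + (Fintype.card n * s + (s + 1).choose 2)) := by exact_mod_cast hnat
  rw [← Real.rpow_natCast, ← Real.rpow_natCast, ← le_div_iff₀ (by positivity),
    ← Real.rpow_sub hq] at hreal
  refine hreal.trans_eq (congrArg _ ?_)
  push_cast [Nat.cast_choose_two]
  ring

end Counting

section Symplectic

variable {l : Type*} [Fintype l] [DecidableEq l] {K : Type*} [Field K]
  {g : Matrix (l ⊕ l) (l ⊕ l) K}

lemma sub_one_mul_J_mul_J_mul_transpose {R : Type*} [CommRing R] {g : Matrix (l ⊕ l) (l ⊕ l) R}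
    (hg : g ∈ symplecticGroup l R) :
    ((g - 1) * J l R) * J l R * ((g - 1) * J l R)ᵀ =
      ((g - 1) * J l R)ᵀ - (g - 1) * J l R := by
  rw [SymplecticGroup.mem_iff] at hg
  calc ((g - 1) * J l R) * J l R * ((g - 1) * J l R)ᵀ
      = -((g - 1) * (J l R * J l R) * J l R * (gᵀ - 1)) := by
        simp only [transpose_mul, J_transpose, transpose_sub, transpose_one, Matrix.mul_assoc,
          Matrix.neg_mul, Matrix.mul_neg]
    _ = g * J l R * gᵀ - g * J l R - J l R * gᵀ + J l R := by
        rw [J_squared]; noncomm_ring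
    _ = ((g - 1) * J l R)ᵀ - (g - 1) * J l R := by
        rw [hg, transpose_mul, J_transpose, transpose_sub, transpose_one]; noncomm_ring

lemma sq_eq_one_of_rank_sub_smul_one_lt (hg : g ∈ symplecticGroup l K) {x : K}
    (hx : (g - x • 1).rank < Fintype.card l) : x ^ 2 = 1 := by
  by_contra hne
  rw [SymplecticGroup.mem_iff] at hg
  have hsplit : (1 - x ^ 2) • J l K =
      (g - x • 1) * (J l K * gᵀ) + (x • J l K) * (g - x • 1)ᵀ := by
    simp only [Matrix.sub_mul, Matrix.mul_sub, transpose_sub, transpose_smul, transpose_one,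
      Matrix.smul_mul, Matrix.mul_smul, Matrix.one_mul, Matrix.mul_one, ← Matrix.mul_assoc, hg,
      smul_smul, sub_smul, one_smul, pow_two]
    abel
  have hJ : ((1 - x ^ 2) • J l K).rank = Fintype.card l + Fintype.card l := by
    have hunit : 1 - x ^ 2 ∈ nonZeroDivisors K :=
      mem_nonZeroDivisors_of_ne_zero (sub_ne_zero.2 (Ne.symm hne))
    rw [rank_smul_of_mem_nonZeroDivisors _ hunit, rank_of_isUnit _
      ((isUnit_iff_isUnit_det _).2 (isUnit_det_J l K)), Fintype.card_sum]
  have hle : ((1 - x ^ 2) • J l K).rank ≤ (g - x • 1).rank + (g - x • 1).rank :=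
    calc ((1 - x ^ 2) • J l K).rank
        ≤ ((g - x • 1) * (J l K * gᵀ)).rank + ((x • J l K) * (g - x • 1)ᵀ).rank :=
          hsplit ▸ rank_add_le _ _
      _ ≤ (g - x • 1).rank + ((g - x • 1)ᵀ).rank :=
          add_le_add (rank_mul_le_left _ _) (rank_mul_le_right _ _)
      _ = (g - x • 1).rank + (g - x • 1).rank := by rw [rank_transpose]
  lia

lemma exists_rank_sub_smul_one_eq_matSupp {ι : Type*} [Fintype ι] [DecidableEq ι]
    (g : Matrix ι ι K) :
    ∃ x : AlgebraicClosure K,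
      (g.map (algebraMap K (AlgebraicClosure K)) - x • 1).rank = matSupp g := by
  set G := g.map (algebraMap K (AlgebraicClosure K))
  let d (x : (AlgebraicClosure K)ˣ) : ℕ := Module.finrank (AlgebraicClosure K)
    (LinearMap.ker (G.mulVecLin - (x : AlgebraicClosure K) • LinearMap.id))
  have hd (x : (AlgebraicClosure K)ˣ) :
      (G - (x : AlgebraicClosure K) • 1).rank + d x = Fintype.card ι := by
    have hG : G.mulVecLin - (x : AlgebraicClosure K) • LinearMap.id =
        (G - (x : AlgebraicClosure K) • 1).mulVecLin := by
      ext; simp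
    change _ + Module.finrank _ (LinearMap.ker (G.mulVecLin - _ • LinearMap.id)) = _
    rw [hG]
    exact rank_add_finrank_ker_mulVecLin _
  obtain ⟨x, hx⟩ : (⨆ x, d x) ∈ Set.range d :=
    Nat.sSup_mem (Set.range_nonempty d)
      ⟨Fintype.card ι, Set.forall_mem_range.2 fun x ↦ (hd x).le.trans' le_add_self⟩
  refine ⟨x, ?_⟩
  change _ = Fintype.card ι - ⨆ x, d x
  rw [← hx, ← hd x, Nat.add_sub_cancel]

lemma rank_sub_one_eq_matSupp_or (hg : g ∈ symplecticGroup l K)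
    (hs : matSupp g < Fintype.card l) :
    (g - 1).rank = matSupp g ∨ (-g - 1).rank = matSupp g := by
  obtain ⟨x, hx⟩ := exists_rank_sub_smul_one_eq_matSupp g
  set φ := algebraMap K (AlgebraicClosure K)
  have hxx : x ^ 2 = 1 :=
    sq_eq_one_of_rank_sub_smul_one_lt (SymplecticGroup.map_mem hg φ) (hx ▸ hs)
  rcases sq_eq_one_iff.1 hxx with rfl | rfl
  · left
    rw [← hx, ← rank_map_ringHom φ, Matrix.map_sub _ (map_sub φ), one_smul,
      Matrix.map_one _ (map_zero φ) (map_one φ)]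
  · right
    have hneg : (-g - 1).map φ =
        (-1 : AlgebraicClosure K) • (g.map φ - (-1 : AlgebraicClosure K) • 1) := by
      rw [Matrix.map_sub _ (map_sub φ), Matrix.map_neg _ (map_neg φ),
        Matrix.map_one _ (map_zero φ) (map_one φ)]
      simp only [neg_smul, one_smul]
      abel
    rw [← hx, ← rank_map_ringHom φ, hneg, rank_smul_of_mem_nonZeroDivisors _ (by simp)]

end Symplectic

lemma card_symplectic_rank_sub_one_eq_le (F l : Type*) [Field F] [Fintype F] [Fintype l]
    [DecidableEq l] (s : ℕ) :
    ({g | g ∈ symplecticGroup l F ∧ (g - 1).rank = s}.ncard : ℝ) ≤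
      (Fintype.card F : ℝ) ^ ((s : ℝ) * (2 * (2 * Fintype.card l) - s + 1) / 2 + s) := by
  have hJ : IsUnit (J l F) := (isUnit_iff_isUnit_det _).2 (isUnit_det_J l F)
  let e : {g | g ∈ symplecticGroup l F ∧ (g - 1).rank = s} → wallSolutions (J l F) s := fun g ↦
    ⟨(g - 1) * J l F, sub_one_mul_J_mul_J_mul_transpose g.2.1,
      (rank_mul_eq_left_of_isUnit_det _ _ (isUnit_det_J l F)).trans g.2.2⟩
  have he : Function.Injective e := fun g h hgh ↦
    Subtype.ext (sub_left_injective (hJ.mul_left_injective (congrArg Subtype.val hgh)))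
  calc ({g | g ∈ symplecticGroup l F ∧ (g - 1).rank = s}.ncard : ℝ)
      ≤ Nat.card (wallSolutions (J l F) s) := by
        exact_mod_cast Nat.card_le_card_of_injective e he
    _ ≤ _ := card_wallSolutions_le (J l F) s
    _ = _ := by simp [two_mul]

theorem card_semisimple_support_eq_bound_general {F l : Type*} [Field F] [Fintype F] [Fintype l]
    [DecidableEq l] {s : ℕ} (hs : s < Fintype.card l) :
    (Nat.card {g : symplecticGroup l F // matSupp (g : Matrix (l ⊕ l) (l ⊕ l) F) = s} : ℝ) ≤
      2 * (Fintype.card F : ℝ) ^ ((s : ℝ) * (2 * (2 * Fintype.card l) - s + 1) / 2 + s) := by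
  set S := {g : Matrix (l ⊕ l) (l ⊕ l) F | g ∈ symplecticGroup l F ∧ (g - 1).rank = s}
  have hcover : {g | g ∈ symplecticGroup l F ∧ matSupp g = s} ⊆ S ∪ -S := by
    rintro g ⟨hg, rfl⟩
    exact (rank_sub_one_eq_matSupp_or hg hs).imp (⟨hg, ·⟩) (⟨SymplecticGroup.neg_mem hg, ·⟩)
  have hcard : Nat.card {g : symplecticGroup l F // matSupp g.1 = s} ≤ 2 * S.ncard :=
    calc Nat.card {g : symplecticGroup l F // matSupp g.1 = s}
        = {g | g ∈ symplecticGroup l F ∧ matSupp g = s}.ncard :=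
          Nat.card_congr (Equiv.subtypeSubtypeEquivSubtypeInter
            (· ∈ symplecticGroup l F) (matSupp · = s))
      _ ≤ (S ∪ -S).ncard := Set.ncard_le_ncard hcover
      _ ≤ S.ncard + (-S).ncard := Set.ncard_union_le _ _
      _ = 2 * S.ncard := by rw [Set.ncard_neg, two_mul]
  calc (Nat.card {g : symplecticGroup l F // matSupp g.1 = s} : ℝ) ≤ 2 * S.ncard := by
        exact_mod_cast hcard
    _ ≤ _ := by gcongr; exact card_symplectic_rank_sub_one_eq_le F l s

/-- **Lemma 3.1(iv) of Liebeck–Shalev–Tiep (symplectic case).** Let `q = p^f`, `n = 2m`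
even, `G = Sp_n(q)`, and `1 ≤ s < n/2`. The number of semisimple elements `g ∈ G`
(of order prime to `p`) with `supp(g) = s` is less than
`15.2 · q^{s(2n−s+1)/2 + n/2}`. -/
theorem card_semisimple_support_eq_bound (F : Type) [Field F] [Fintype F]
    (p f : ℕ) (hp : p.Prime) (hf : 0 < f) (hcard : Fintype.card F = p ^ f)
    (m : ℕ) (s : ℕ) (h1 : 1 ≤ s) (h2 : s < m) :
    (Nat.card {g : Matrix.symplecticGroup (Fin m) F //
        Nat.Coprime (orderOf g) p ∧
        matSupp (g : Matrix (Fin m ⊕ Fin m) (Fin m ⊕ Fin m) F) = s} : ℝ) <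
      15.2 * (Fintype.card F : ℝ) ^
        ((s : ℝ) * (2 * (2 * m : ℝ) - s + 1) / 2 + (2 * m : ℝ) / 2) := by
  calc _ ≤ (Nat.card {g : symplecticGroup (Fin m) F // matSupp g.1 = s} : ℝ) :=
        Nat.cast_le.2 (Nat.card_mono (Set.toFinite _) fun _ hg ↦ hg.2)
    _ ≤ _ := card_semisimple_support_eq_bound_general (by simpa using h2)
    _ < _ := by
        rw [Fintype.card_fin, mul_div_cancel_left₀ _ two_ne_zero]
        have hq : (1 : ℝ) < Fintype.card F := by exact_mod_cast Fintype.one_lt_card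
        gcongr ?_ * ?_
        · norm_num
        · exact Real.rpow_lt_rpow_of_exponent_lt hq (by gcongr)

end McKayGraphs
end
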